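/- For every integer m ≥ 0, every p ∈ [1,∞] and every α > 0, with γ = max(0, m − 1/p), there is a constant c > 0, depending only on f, D, m, p and α, such that for every ν ∈ (0,1], the time average over [T₁,T₂] satisfies { |u(t)|_{m,p}^α }^{1/α} ≥ c ν^{−γ}. -/

import Mathlib

open MeasureTheory Set
open scoped ENNReal

/-- The `L^p` norm (on the circle, i.e. over one period `(0,1]`) of the `m`-th
derivative of a function `v : ℝ → ℝ` (identified with a function on `S¹ = ℝ/ℤ`). -/
noncomputable def sobLp (m : ℕ) (p : ℝ≥0∞) (v : ℝ → ℝ) : ℝ :=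
  (eLpNorm (iteratedDeriv m v) p (volume.restrict (Ioc (0:ℝ) 1))).toReal

/-- `u` is a smooth, space-periodic, zero-mean-value solution of the generalised
Burgers equation `u_t + f'(u) u_x - ν u_xx = 0` with strongly convex `f` and
nonzero initial condition. -/
structure IsBurgersSolution (f : ℝ → ℝ) (σ ν : ℝ) (u : ℝ → ℝ → ℝ) : Prop where
  hf : ContDiff ℝ (⊤ : ℕ∞) f
  hσ : 0 < σ
  hconv : ∀ y, σ ≤ iteratedDeriv 2 f y
  hν : 0 < ν
  hu : ContDiffOn ℝ (⊤ : ℕ∞) (Function.uncurry u) (Ici (0:ℝ) ×ˢ univ)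
  hper : ∀ t x, u t (x + 1) = u t x
  hpde : ∀ t, 0 < t → ∀ x,
    deriv (fun s => u s x) t + deriv f (u t x) * deriv (u t) x
      - ν * deriv (deriv (u t)) x = 0
  hmean : ∀ t, 0 ≤ t → ∫ x in Ioc (0:ℝ) 1, u t x = 0
  hinit : ∃ x, u 0 x ≠ 0

/-- The quantity `D = max(|u₀|₁⁻¹, |u₀|_{1,∞})`. -/
noncomputable def burgersD (u : ℝ → ℝ → ℝ) : ℝ :=
  max (sobLp 0 1 (u 0))⁻¹ (sobLp 1 ⊤ (u 0))

/-- `T₁ = D⁻² C̃⁻¹ / 4`. -/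
noncomputable def burgersT₁ (D Ct : ℝ) : ℝ := (D ^ 2)⁻¹ * Ct⁻¹ / 4

/-- `T₂ = max(3T₁/2, 2Dσ⁻¹)`. -/
noncomputable def burgersT₂ (σ D Ct : ℝ) : ℝ :=
  max (3 / 2 * burgersT₁ D Ct) (2 * D * σ⁻¹)

/-- Time average over `[T₁, T₂]`. -/
noncomputable def timeAvg (T₁ T₂ : ℝ) (A : ℝ → ℝ) : ℝ :=
  (T₂ - T₁)⁻¹ * ∫ t in T₁..T₂, A t

/-- The structure function `S_p(ℓ)`. -/
noncomputable def structFun (T₁ T₂ : ℝ) (u : ℝ → ℝ → ℝ) (p ℓ : ℝ) : ℝ :=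
  timeAvg T₁ T₂ (fun t => ∫ x in Ioc (0:ℝ) 1, |u t (x + ℓ) - u t x| ^ p)

/-!
The maximum principle for `t u_x` gives Oleinik's one-sided bound `u_x ≤ 1 / (σ t)`, hence
`|u|_∞` and `|u_x|_1` are bounded on `[T₁, T₂]` uniformly in `ν`. The viscous flux
`f(u) - ν u_x` also obeys the maximum principle, so together with Oleinik's bound
`ν |u_x|_∞` is bounded as well.

The energy identity `d/dt |u|_2² = -2ν |u_x|_2²` keeps `|u|_2²` above `D⁻² / 2` up to time `T₁`,
while Oleinik's bound brings it below `D⁻² / 4` at time `T₂`; so `ν |u_x|_2²` has time average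
`≳ 1`. Being at most `C̃`, it is `≳ 1` on a set of times of positive proportion. At such a time
`|u_x|_1 ≲ 1`, `ν |u_x|_2² ≳ 1` and `ν |u_x|_∞ ≲ 1` force `|u_x| ≳ 1/ν` on a set of measure `≳ ν`,
which is the case `m = 1`; for `m ≥ 2`, interpolating `|u_x|_∞ ≳ 1/ν` on intervals of length
`∼ ν` between `|u_x|_1` and `|u|_{m,p}` gives the bound. For `m = 0` it suffices
that `|u|_2²` is bounded below just after `T₁` and `|u|_∞` bounded above.
-/

section TwoVariables

variable {E : Type*} [NormedAddCommGroup E] [NormedSpace ℝ E] {u : ℝ → ℝ → E} {s : Set ℝ}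
  {t x : ℝ} {L : ℝ × ℝ →L[ℝ] E}

lemma hasDerivAt_left_of_hasFDerivAt_uncurry
    (hu : HasFDerivAt (Function.uncurry u) L (t, x)) :
    HasDerivAt (fun r => u r x) (L (1, 0)) t :=
  hu.comp_hasDerivAt (f := fun r : ℝ => (r, x)) t
    ((hasDerivAt_id t).prodMk (hasDerivAt_const t x))

lemma hasDerivAt_right_of_hasFDerivAt_uncurry
    (hu : HasFDerivAt (Function.uncurry u) L (t, x)) : HasDerivAt (u t) (L (0, 1)) x :=
  hu.comp_hasDerivAt x ((hasDerivAt_const x t).prodMk (hasDerivAt_id x))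

lemma hasDerivAt_right_of_hasFDerivWithinAt_uncurry
    (hu : HasFDerivWithinAt (Function.uncurry u) L (s ×ˢ univ) (t, x)) (ht : t ∈ s) :
    HasDerivAt (u t) (L (0, 1)) x :=
  hasDerivWithinAt_univ.1 <| hu.comp_hasDerivWithinAt x
    ((hasDerivAt_const x t).prodMk (hasDerivAt_id x)).hasDerivWithinAt
    fun _ _ => ⟨ht, mem_univ _⟩

lemma contDiff_right_of_contDiffOn_uncurry {n : WithTop ℕ∞}
    (hu : ContDiffOn ℝ n (Function.uncurry u) (s ×ˢ univ)) (ht : t ∈ s) : ContDiff ℝ n (u t) :=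
  contDiffOn_univ.1 <| hu.comp (contDiff_prodMk_right t).contDiffOn fun _ _ => ⟨ht, mem_univ _⟩

lemma continuous_right_of_continuousOn_uncurry {X Y Z : Type*} [TopologicalSpace X]
    [TopologicalSpace Y] [TopologicalSpace Z] {g : X → Y → Z} {s : Set X} {t : X}
    (hg : ContinuousOn (Function.uncurry g) (s ×ˢ univ)) (ht : t ∈ s) : Continuous (g t) :=
  continuousOn_univ.1 <| hg.comp (f := fun y => (t, y)) (by fun_prop)
    fun _ _ => ⟨ht, mem_univ _⟩

lemma contDiffOn_uncurry_iteratedDeriv (hs : UniqueDiffOn ℝ s) {m n : WithTop ℕ∞} {k : ℕ}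
    (hu : ContDiffOn ℝ n (Function.uncurry u) (s ×ˢ univ)) (hmn : m + k ≤ n) :
    ContDiffOn ℝ m (Function.uncurry fun r => iteratedDeriv k (u r)) (s ×ˢ univ) := by
  induction k generalizing m with
  | zero => simpa using hu.of_le (by simpa using hmn)
  | succ k ih =>
    have hk : ContDiffOn ℝ (m + 1) (Function.uncurry fun r => iteratedDeriv k (u r))
        (s ×ˢ univ) := ih (by rwa [add_assoc, add_comm (1 : WithTop ℕ∞), ← Nat.cast_succ])
    refine ((hk.fderivWithin (hs.prod uniqueDiffOn_univ) le_rfl).clm_apply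
      (contDiffOn_const (c := ((0, 1) : ℝ × ℝ)))).congr ?_
    rintro ⟨t, x⟩ ⟨ht, hx⟩
    simpa only [Function.uncurry_apply_pair, iteratedDeriv_succ] using
      (hasDerivAt_right_of_hasFDerivWithinAt_uncurry
        (hk.differentiableOn (by simp) _ ⟨ht, hx⟩).hasFDerivWithinAt ht).deriv

lemma hasDerivAt_deriv_right_of_contDiffAt (hu : ContDiffAt ℝ 2 (Function.uncurry u) (t, x)) :
    HasDerivAt (fun r => deriv (u r) x) (deriv (fun y => deriv (fun r => u r y) t) x) t := by
  set U := Function.uncurry u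
  have hdiff : ∀ᶠ q in nhds (t, x), DifferentiableAt ℝ U q :=
    (hu.eventually (by simp)).mono fun _ h => h.differentiableAt (by simp)
  have hleft : HasDerivAt (fun r : ℝ => (r, x)) (1, 0) t :=
    (hasDerivAt_id t).prodMk (hasDerivAt_const t x)
  have hright : HasDerivAt (fun y : ℝ => (t, y)) (0, 1) x :=
    (hasDerivAt_const x t).prodMk (hasDerivAt_id x)
  have hDU : HasFDerivAt (fderiv ℝ U) (fderiv ℝ (fderiv ℝ U) (t, x)) (t, x) :=
    ((hu.fderiv_right (m := 1) (by norm_num)).differentiableAt (by simp)).hasFDerivAt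
  have hxt : HasDerivAt (fun r => fderiv ℝ U (r, x) (0, 1))
      (fderiv ℝ (fderiv ℝ U) (t, x) (1, 0) (0, 1)) t :=
    (ContinuousLinearMap.apply ℝ E ((0, 1) : ℝ × ℝ)).hasFDerivAt.comp_hasDerivAt t
      (hDU.comp_hasDerivAt t hleft)
  have htx : HasDerivAt (fun y => fderiv ℝ U (t, y) (1, 0))
      (fderiv ℝ (fderiv ℝ U) (t, x) (0, 1) (1, 0)) x :=
    (ContinuousLinearMap.apply ℝ E ((1, 0) : ℝ × ℝ)).hasFDerivAt.comp_hasDerivAt x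
      (hDU.comp_hasDerivAt x hright)
  have hx : (fun r => deriv (u r) x) =ᶠ[nhds t] fun r => fderiv ℝ U (r, x) (0, 1) :=
    (hleft.continuousAt.eventually hdiff).mono fun _ h =>
      (hasDerivAt_right_of_hasFDerivAt_uncurry h.hasFDerivAt).deriv
  have ht : (fun y => deriv (fun r => u r y) t) =ᶠ[nhds x] fun y => fderiv ℝ U (t, y) (1, 0) :=
    (hright.continuousAt.eventually hdiff).mono fun _ h =>
      (hasDerivAt_left_of_hasFDerivAt_uncurry h.hasFDerivAt).deriv
  rw [ht.deriv_eq, htx.deriv, ← hu.isSymmSndFDerivAt (by simp) (1, 0) (0, 1)]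
  exact hxt.congr_of_eventuallyEq hx

end TwoVariables

section MaximumPrinciple

lemma deriv_deriv_nonpos_of_isLocalMax {g : ℝ → ℝ} {x : ℝ} (hg : ContinuousAt g x)
    (hmax : IsLocalMax g x) : deriv (deriv g) x ≤ 0 := by
  by_contra! hpos
  have hmin : IsLocalMin g x := isLocalMin_of_deriv_deriv_pos hpos hmax.deriv_eq_zero hg
  have hconst : g =ᶠ[nhds x] fun _ => g x :=
    hmax.mp (hmin.mono fun _ h₁ h₂ => le_antisymm h₂ h₁)
  have hzero : deriv (deriv g) x = 0 := by simpa using hconst.deriv.deriv_eq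
  exact hpos.ne' hzero

lemma nonneg_of_hasDerivAt_of_isMaxOn_Icc {g : ℝ → ℝ} {a t d : ℝ} (hat : a < t)
    (hg : HasDerivAt g d t) (hmax : IsMaxOn g (Icc a t) t) : 0 ≤ d := by
  have hcone : a - t ∈ posTangentConeAt (Icc a t) t :=
    sub_mem_posTangentConeAt_of_segment_subset (by rw [segment_symm, segment_eq_Icc hat.le])
  have hle : (a - t) * d ≤ 0 := by
    simpa using hmax.localize.hasFDerivWithinAt_nonpos hg.hasFDerivAt.hasFDerivWithinAt hcone
  nlinarith

theorem weak_maximum_principle {Z : ℝ → ℝ → ℝ} {P T M : ℝ} (hP : 0 < P) (hT : 0 ≤ T)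
    (hZ : ContinuousOn (Function.uncurry Z) (Icc 0 T ×ˢ univ))
    (hper : ∀ t ∈ Icc 0 T, Function.Periodic (Z t) P) (hinit : ∀ x, Z 0 x ≤ M)
    (hsub : ∀ t ∈ Ioc 0 T, ∀ x, M < Z t x → deriv (Z t) x = 0 → deriv (deriv (Z t)) x ≤ 0 →
      ∃ d ≤ 0, HasDerivAt (fun s => Z s x) d t) (x : ℝ) : Z T x ≤ M := by
  by_contra! hM
  -- A slightly tilted function still exceeds `M`, and now has negative time derivative at maxima.
  obtain ⟨ε, hε, hεM⟩ : ∃ ε > 0, M < Z T x - ε * T := by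
    refine ⟨(Z T x - M) / (2 * (T + 1)), by have := sub_pos.2 hM; positivity, ?_⟩
    have : (Z T x - M) / (2 * (T + 1)) * T ≤ (Z T x - M) / 2 := by
      rw [div_mul_eq_mul_div, div_le_div_iff₀ (by positivity) two_pos]
      nlinarith
    linarith
  have hW : ContinuousOn (fun q : ℝ × ℝ => Z q.1 q.2 - ε * q.1) (Icc 0 T ×ˢ Icc 0 P) :=
    (hZ.mono (prod_mono subset_rfl (subset_univ _))).sub (by fun_prop)
  obtain ⟨⟨t, y⟩, ⟨ht, -⟩, hmax⟩ := (isCompact_Icc.prod isCompact_Icc).exists_isMaxOn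
    ⟨(0, 0), left_mem_Icc.2 hT, left_mem_Icc.2 hP.le⟩ hW
  have hglobal : ∀ s ∈ Icc 0 T, ∀ z, Z s z - ε * s ≤ Z t y - ε * t := by
    intro s hs z
    obtain ⟨z', hz', hzz'⟩ := (hper s hs).exists_mem_Ico₀ hP z
    rw [hzz']
    exact hmax (⟨hs, Ico_subset_Icc_self hz'⟩ : (s, z') ∈ Icc 0 T ×ˢ Icc 0 P)
  have hlarge : M < Z t y - ε * t := hεM.trans_le (hglobal T (right_mem_Icc.2 hT) x)
  have htpos : 0 < t := ht.1.lt_of_ne' fun h0 => by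
    simp only at h0
    rw [h0] at hlarge
    linarith [hinit y]
  have hlocal : IsLocalMax (Z t) y := .of_forall fun z => by linarith [hglobal t ht z]
  have hcont : Continuous (Z t) := continuous_right_of_continuousOn_uncurry hZ ht
  obtain ⟨d, hd, hderiv⟩ := hsub t ⟨htpos, ht.2⟩ y (by nlinarith) hlocal.deriv_eq_zero
    (deriv_deriv_nonpos_of_isLocalMax hcont.continuousAt hlocal)
  have hdε : 0 ≤ d - ε * 1 := nonneg_of_hasDerivAt_of_isMaxOn_Icc htpos
    (hderiv.sub ((hasDerivAt_id t).const_mul ε))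
    fun s hs => hglobal s ⟨hs.1, hs.2.trans ht.2⟩ y
  linarith

end MaximumPrinciple

section LpNorm

variable {α E : Type*} [MeasurableSpace α] [NormedAddCommGroup E] {μ : Measure α} {p : ℝ≥0∞}

lemma setIntegral_norm_le_rpow_mul_lpNorm {g : α → E} (hp : 1 ≤ p) (hg : MemLp g p μ)
    {s : Set α} (hs : μ s ≠ ⊤) :
    ∫ x in s, ‖g x‖ ∂μ ≤ μ.real s ^ (1 - (1 / p).toReal) * lpNorm g p μ := by
  have hrestrict : MemLp g p (μ.restrict s) := hg.restrict s
  rcases eq_or_ne (μ s) 0 with h0 | h0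
  · rw [Measure.restrict_eq_zero.2 h0, integral_zero_measure]
    exact mul_nonneg (Real.rpow_nonneg measureReal_nonneg _) lpNorm_nonneg
  have hholder := (eLpNorm_le_eLpNorm_mul_rpow_measure_univ hp hrestrict.1).trans
    (mul_le_mul_left (eLpNorm_mono_measure g Measure.restrict_le_self) _)
  rw [Measure.restrict_apply_univ] at hholder
  have := ENNReal.toReal_mono (ENNReal.mul_ne_top hg.2.ne (ENNReal.rpow_ne_top_of_ne_zero h0 hs))
    hholder
  rw [toReal_eLpNorm hrestrict.1, lpNorm_one_eq_integral_norm hrestrict.1, ENNReal.toReal_mul,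
    toReal_eLpNorm hg.1, ← ENNReal.toReal_rpow, mul_comm] at this
  simpa [measureReal_def] using this

lemma mul_rpow_measureReal_le_lpNorm {g : α → ℝ} (hp : p ≠ 0) (hg : MemLp g p μ)
    (hgm : Measurable g) {s : ℝ} (hs : 0 < s) (hpos : 0 < μ.real {x | s ≤ |g x|}) :
    s * μ.real {x | s ≤ |g x|} ^ (1 / p).toReal ≤ lpNorm g p μ := by
  set F := {x | s ≤ |g x|}
  have hF : MeasurableSet F := measurableSet_le measurable_const hgm.abs
  have hle : eLpNorm (F.indicator fun _ => s) p μ ≤ eLpNorm g p μ := eLpNorm_mono fun x => by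
    by_cases hx : x ∈ F
    · rw [indicator_of_mem hx, Real.norm_eq_abs, abs_of_pos hs]
      exact hx
    · simp [indicator_of_notMem hx]
  rw [eLpNorm_indicator_const' hF (ENNReal.toReal_pos_iff.1 hpos).1.ne' hp] at hle
  have := ENNReal.toReal_mono hg.2.ne hle
  rw [ENNReal.toReal_mul, ← ENNReal.toReal_rpow, toReal_eLpNorm hg.1, toReal_enorm,
    Real.norm_eq_abs, abs_of_pos hs] at this
  simpa [measureReal_def] using this

lemma integral_sq_le_mul_integral_abs_add [IsFiniteMeasure μ] {g : α → ℝ} (hg : Measurable g)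
    {s M : ℝ} (hs : 0 ≤ s) (hM : ∀ᵐ x ∂μ, |g x| ≤ M) :
    ∫ x, g x ^ 2 ∂μ ≤ s * ∫ x, |g x| ∂μ + M ^ 2 * μ.real {x | s ≤ |g x|} := by
  set F := {x | s ≤ |g x|}
  have hF : MeasurableSet F := measurableSet_le measurable_const hg.abs
  have hint : Integrable g μ := .of_bound hg.aestronglyMeasurable M hM
  have hind : Integrable (F.indicator fun _ => M ^ 2) μ := (integrable_const _).indicator hF
  have hsq : Integrable (fun x => g x ^ 2) μ :=
    .of_bound (hg.pow_const 2).aestronglyMeasurable (M ^ 2) <| hM.mono fun x hx => by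
      simpa only [norm_pow] using pow_le_pow_left₀ (norm_nonneg _) hx 2
  calc ∫ x, g x ^ 2 ∂μ ≤ ∫ x, (s * |g x| + F.indicator (fun _ => M ^ 2) x) ∂μ := by
        refine integral_mono_ae hsq ((hint.abs.const_mul s).add hind) <| hM.mono fun x hx => ?_
        by_cases hxF : x ∈ F
        · simp only [indicator_of_mem hxF]
          have : g x ^ 2 ≤ M ^ 2 := sq_le_sq' (neg_le_of_abs_le hx) (le_of_abs_le hx)
          nlinarith [abs_nonneg (g x)]
        · simp only [indicator_of_notMem hxF, add_zero]
          rw [← sq_abs, sq]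
          exact mul_le_mul_of_nonneg_right (not_le.1 hxF).le (abs_nonneg _)
    _ = s * ∫ x, |g x| ∂μ + M ^ 2 * μ.real F := by
        rw [integral_add (hint.abs.const_mul s) hind, integral_const_mul,
          integral_indicator_const _ hF, smul_eq_mul, mul_comm (μ.real F)]

lemma abs_lpNorm_sub_lpNorm_le [IsProbabilityMeasure μ] {g h : α → E} {C : ℝ} (hp : 1 ≤ p)
    (hg : MemLp g p μ) (hh : MemLp h p μ) (hC : ∀ᵐ x ∂μ, ‖g x - h x‖ ≤ C) :
    |lpNorm g p μ - lpNorm h p μ| ≤ C := by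
  have hsub : lpNorm (g - h) p μ ≤ C := by
    have hC0 : 0 ≤ C := (norm_nonneg _).trans hC.exists.choose_spec
    rw [← toReal_eLpNorm (hg.sub hh).1]
    exact ENNReal.toReal_le_of_le_ofReal hC0 <| by
      simpa using eLpNorm_le_of_ae_bound (f := g - h) (p := p) hC
  rw [abs_le]
  constructor
  · linarith [lpNorm_le_lpNorm_add_lpNorm_sub (f := h) hg hp]
  · linarith [lpNorm_le_lpNorm_add_lpNorm_sub' (f := g) hh hp]

end LpNorm

section ContinuousOnInterval

variable {E : Type*} [NormedAddCommGroup E] {g : ℝ → E} {a b : ℝ}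

lemma memLp_restrict_Ioc_of_continuousOn (hg : ContinuousOn g (Icc a b)) (p : ℝ≥0∞) :
    MemLp g p (volume.restrict (Ioc a b)) := by
  obtain ⟨C, hC⟩ := isCompact_Icc.exists_bound_of_continuousOn hg
  exact MemLp.of_bound ((hg.mono Ioc_subset_Icc_self).aestronglyMeasurable measurableSet_Ioc) C
    ((ae_restrict_mem measurableSet_Ioc).mono fun x hx => hC x (Ioc_subset_Icc_self hx))

lemma norm_le_lpNorm_top_of_continuousOn (hab : a < b) (hg : ContinuousOn g (Icc a b)) {x : ℝ}
    (hx : x ∈ Icc a b) : ‖g x‖ ≤ lpNorm g ⊤ (volume.restrict (Ioc a b)) := by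
  set M := lpNorm g ⊤ (volume.restrict (Ioc a b))
  have hae : (fun y => min ‖g y‖ M) =ᵐ[volume.restrict (Icc a b)] fun y => ‖g y‖ := by
    rw [← restrict_Ioc_eq_restrict_Icc]
    exact (ae_le_lpNorm_exponent_top (memLp_restrict_Ioc_of_continuousOn hg ⊤)).mono
      fun y hy => min_eq_left hy
  exact min_eq_left_iff.1 <|
    Measure.eqOn_Icc_of_ae_eq volume hab.ne hae (hg.norm.inf continuousOn_const) hg.norm hx

end ContinuousOnInterval

section SobLp

variable {m : ℕ} {p : ℝ≥0∞} {v : ℝ → ℝ}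

lemma sobLp_nonneg : 0 ≤ sobLp m p v := ENNReal.toReal_nonneg

lemma sobLp_deriv : sobLp m p (deriv v) = sobLp (m + 1) p v := by
  rw [sobLp, sobLp, iteratedDeriv_succ']

lemma sobLp_eq_lpNorm (hv : Continuous (iteratedDeriv m v)) (p : ℝ≥0∞) :
    sobLp m p v = lpNorm (iteratedDeriv m v) p (volume.restrict (Ioc 0 1)) :=
  toReal_eLpNorm hv.aestronglyMeasurable

lemma sobLp_one_eq_integral (hv : Continuous (iteratedDeriv m v)) :
    sobLp m 1 v = ∫ x in (0 : ℝ)..1, |iteratedDeriv m v x| := by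
  rw [sobLp_eq_lpNorm hv, lpNorm_one_eq_integral_norm hv.aestronglyMeasurable,
    intervalIntegral.integral_of_le zero_le_one]
  rfl

lemma sobLp_two_sq_eq_integral (hv : Continuous (iteratedDeriv m v)) :
    sobLp m 2 v ^ 2 = ∫ x in (0 : ℝ)..1, iteratedDeriv m v x ^ 2 := by
  have hnonneg : 0 ≤ ∫ x in Ioc (0 : ℝ) 1, ‖iteratedDeriv m v x‖ ^ (2 : ℝ≥0∞).toReal :=
    integral_nonneg fun _ => by positivity
  rw [sobLp_eq_lpNorm hv, lpNorm_eq_integral_norm_rpow_toReal (by simp) (by simp)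
    hv.aestronglyMeasurable, intervalIntegral.integral_of_le zero_le_one, ← Real.rpow_natCast,
    ← Real.rpow_mul hnonneg]
  simp

lemma abs_iteratedDeriv_le_sobLp_top (hv : Continuous (iteratedDeriv m v)) {x : ℝ}
    (hx : x ∈ Icc (0 : ℝ) 1) : |iteratedDeriv m v x| ≤ sobLp m ⊤ v := by
  rw [sobLp_eq_lpNorm hv]
  exact norm_le_lpNorm_top_of_continuousOn zero_lt_one hv.continuousOn hx

lemma sobLp_top_le {C : ℝ} (hC : 0 ≤ C) (hv : ∀ x ∈ Icc (0 : ℝ) 1, |iteratedDeriv m v x| ≤ C) :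
    sobLp m ⊤ v ≤ C := by
  have hae : ∀ᵐ x ∂volume.restrict (Ioc (0 : ℝ) 1), ‖iteratedDeriv m v x‖ ≤ C :=
    (ae_restrict_mem measurableSet_Ioc).mono fun x hx => hv x (Ioc_subset_Icc_self hx)
  exact ENNReal.toReal_le_of_le_ofReal hC (by simpa using eLpNorm_le_of_ae_bound (p := ⊤) hae)

lemma intervalIntegral_abs_iteratedDeriv_le (hp : 1 ≤ p) (hv : Continuous (iteratedDeriv m v))
    {a b : ℝ} (ha : 0 ≤ a) (hab : a ≤ b) (hb : b ≤ 1) :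
    ∫ x in a..b, |iteratedDeriv m v x| ≤ (b - a) ^ (1 - (1 / p).toReal) * sobLp m p v := by
  have hsub : Ioc a b ⊆ Ioc 0 1 := Ioc_subset_Ioc ha hb
  have key := setIntegral_norm_le_rpow_mul_lpNorm (s := Ioc a b) hp
    (memLp_restrict_Ioc_of_continuousOn (hv.continuousOn (s := Icc 0 1)) p) (measure_ne_top _ _)
  rw [Measure.restrict_restrict_of_subset hsub, measureReal_restrict_apply measurableSet_Ioc,
    inter_eq_self_of_subset_left hsub, Real.volume_real_Ioc_of_le hab, ← sobLp_eq_lpNorm hv,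
    ← intervalIntegral.integral_of_le hab] at key
  exact key

lemma sobLp_one_le_sobLp (hp : 1 ≤ p) (hv : Continuous (iteratedDeriv m v)) :
    sobLp m 1 v ≤ sobLp m p v := by
  rw [sobLp_one_eq_integral hv]
  simpa using intervalIntegral_abs_iteratedDeriv_le hp hv le_rfl zero_le_one le_rfl

lemma sobLp_two_sq_le_mul (hv : Continuous (iteratedDeriv m v)) :
    sobLp m 2 v ^ 2 ≤ sobLp m 1 v * sobLp m ⊤ v := by
  rw [sobLp_two_sq_eq_integral hv, sobLp_one_eq_integral hv,
    ← intervalIntegral.integral_mul_const]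
  refine intervalIntegral.integral_mono_on zero_le_one ((hv.pow 2).intervalIntegrable _ _)
    ((hv.abs.mul continuous_const).intervalIntegrable _ _) fun x hx => ?_
  rw [← sq_abs, sq]
  exact mul_le_mul_of_nonneg_left (abs_iteratedDeriv_le_sobLp_top hv hx) (abs_nonneg _)

lemma continuousOn_sobLp {u : ℝ → ℝ → ℝ} {s : Set ℝ} (hp : 1 ≤ p)
    (hu : ContinuousOn (Function.uncurry fun t => iteratedDeriv m (u t)) (s ×ˢ univ)) :
    ContinuousOn (fun t => sobLp m p (u t)) s := by
  have hcont : ∀ t ∈ s, Continuous (iteratedDeriv m (u t)) := fun t ht =>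
    continuous_right_of_continuousOn_uncurry (g := fun t => iteratedDeriv m (u t)) hu ht
  have hmem : ∀ t ∈ s, MemLp (iteratedDeriv m (u t)) p (volume.restrict (Ioc 0 1)) := fun t ht =>
    memLp_restrict_Ioc_of_continuousOn (hcont t ht).continuousOn p
  have : IsProbabilityMeasure (volume.restrict (Ioc (0 : ℝ) 1)) := ⟨by simp⟩
  refine Metric.continuousOn_iff'.2 fun t ht ε hε => ?_
  obtain ⟨n, hn, hunif⟩ := isCompact_Icc.mem_uniformity_of_prod (k := Icc (0 : ℝ) 1)
    (hu.mono (prod_mono subset_rfl (subset_univ _))) ht (Metric.dist_mem_uniformity (half_pos hε))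
  filter_upwards [hn, self_mem_nhdsWithin] with r hr hrs
  rw [sobLp_eq_lpNorm (hcont r hrs), sobLp_eq_lpNorm (hcont t ht), Real.dist_eq]
  refine (abs_lpNorm_sub_lpNorm_le hp (hmem r hrs) (hmem t ht) ?_).trans_lt (half_lt_self hε)
  filter_upwards [ae_restrict_mem measurableSet_Ioc] with x hx
  exact (hunif r hr x (Ioc_subset_Icc_self hx)).le

end SobLp

section Interpolation

lemma exists_abs_deriv_mul_sub_le {g : ℝ → ℝ} (hg : Differentiable ℝ g) {y z : ℝ} (hyz : y < z) :
    ∃ x ∈ Ioo y z, |deriv g x| * (z - y) ≤ |g y| + |g z| := by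
  obtain ⟨x, hx, hslope⟩ := exists_deriv_eq_slope g hyz hg.continuous.continuousOn
    hg.differentiableOn
  refine ⟨x, hx, ?_⟩
  have hpos : 0 < z - y := sub_pos.2 hyz
  rw [hslope, abs_div, abs_of_pos hpos, div_mul_cancel₀ _ hpos.ne', add_comm]
  exact abs_sub _ _

lemma exists_abs_iteratedDeriv_mul_pow_le (j : ℕ) : ∃ C > 0, ∀ v : ℝ → ℝ, ContDiff ℝ j v →
    ∀ a b : ℝ, a < b → ∃ z ∈ Icc a b,
      |iteratedDeriv j v z| * (b - a) ^ (j + 1) ≤ C * ∫ x in a..b, |v x| := by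
  induction j with
  | zero =>
    refine ⟨1, one_pos, fun v hv a b hab => ?_⟩
    obtain ⟨z, hz, hmin⟩ := isCompact_Icc.exists_isMinOn (nonempty_Icc.2 hab.le)
      hv.continuous.abs.continuousOn
    have hconst : ∫ _ in a..b, |v z| ≤ ∫ x in a..b, |v x| :=
      intervalIntegral.integral_mono_on hab.le intervalIntegrable_const
        (hv.continuous.abs.intervalIntegrable _ _) hmin
    exact ⟨z, hz, by simpa [mul_comm] using hconst⟩
  | succ j ih =>
    obtain ⟨C, hC, ih⟩ := ih
    refine ⟨2 * C * 3 ^ (j + 2), by positivity, fun v hv a b hab => ?_⟩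
    obtain ⟨h, hhpos, hba⟩ : ∃ h > 0, b - a = 3 * h :=
      ⟨(b - a) / 3, div_pos (sub_pos.2 hab) three_pos, by ring⟩
    have hint (y z : ℝ) : IntervalIntegrable (fun x => |v x|) volume y z :=
      hv.continuous.abs.intervalIntegrable y z
    have hmono {y z : ℝ} (hay : a ≤ y) (hyz : y ≤ z) (hzb : z ≤ b) :
        C * ∫ x in y..z, |v x| ≤ C * ∫ x in a..b, |v x| :=
      mul_le_mul_of_nonneg_left (intervalIntegral.integral_mono_interval hay hyz hzb
        (.of_forall fun _ => abs_nonneg _) (hint a b)) hC.le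
    have hvj : ContDiff ℝ j v := hv.of_le (by exact_mod_cast j.le_succ)
    obtain ⟨y, hy, hyle⟩ := ih v hvj a (a + h) (by linarith)
    obtain ⟨z, hz, hzle⟩ := ih v hvj (b - h) b (by linarith)
    obtain ⟨x, hx, hxle⟩ := exists_abs_deriv_mul_sub_le (y := y) (z := z)
      (hv.differentiable_iteratedDeriv j (by exact_mod_cast j.lt_succ_self))
      (by linarith [hy.2, hz.1])
    refine ⟨x, ⟨hy.1.trans hx.1.le, hx.2.le.trans hz.2⟩, ?_⟩
    rw [add_sub_cancel_left] at hyle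
    rw [sub_sub_cancel] at hzle
    rw [iteratedDeriv_succ]
    set A := |deriv (iteratedDeriv j v) x|
    calc A * (b - a) ^ (j + 1 + 1) = A * h * h ^ (j + 1) * 3 ^ (j + 2) := by
          rw [hba]; ring
      _ ≤ (|iteratedDeriv j v y| + |iteratedDeriv j v z|) * h ^ (j + 1) * 3 ^ (j + 2) := by
          gcongr
          refine le_trans ?_ hxle
          gcongr
          linarith [hy.2, hz.1]
      _ ≤ (C * (∫ x in a..b, |v x|) + C * ∫ x in a..b, |v x|) * 3 ^ (j + 2) := by
          rw [add_mul]
          exact mul_le_mul_of_nonneg_right (add_le_add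
            (hyle.trans (hmono le_rfl (by linarith) (by linarith)))
            (hzle.trans (hmono (by linarith) (by linarith) le_rfl))) (by positivity)
      _ = 2 * C * 3 ^ (j + 2) * ∫ x in a..b, |v x| := by ring

variable {v : ℝ → ℝ} {a b : ℝ}

lemma abs_sub_le_intervalIntegral_abs_deriv (hv : ContDiff ℝ 1 v) {x z : ℝ} (hx : x ∈ Icc a b)
    (hz : z ∈ Icc a b) : |v x - v z| ≤ ∫ y in a..b, |deriv v y| := by
  have hab : a ≤ b := hx.1.trans hx.2
  have hcont : Continuous (deriv v) := hv.continuous_deriv le_rfl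
  rw [← intervalIntegral.integral_deriv_eq_sub (fun y _ => (hv.differentiable one_ne_zero y))
    (hcont.intervalIntegrable _ _), intervalIntegral.integral_of_le hab]
  refine (intervalIntegral.norm_integral_le_integral_norm_uIoc).trans (setIntegral_mono_set
    (hcont.norm.integrableOn_Icc.mono_set Ioc_subset_Icc_self) (.of_forall fun _ => norm_nonneg _)
    (Ioc_subset_Ioc (le_min hz.1 hx.1) (max_le hz.2 hx.2)).eventuallyLE)

lemma abs_le_sum_mul_pow_add_pow_mul_intervalIntegral {k : ℕ} (hv : ContDiff ℝ (k + 1) v)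
    {q : ℕ → ℝ} (hq : ∀ j ≤ k, ∃ z ∈ Icc a b, |iteratedDeriv j v z| ≤ q j) {x : ℝ}
    (hx : x ∈ Icc a b) :
    |v x| ≤ ∑ j ∈ Finset.range (k + 1), q j * (b - a) ^ j +
      (b - a) ^ k * ∫ y in a..b, |iteratedDeriv (k + 1) v y| := by
  induction k generalizing v q x with
  | zero =>
    obtain ⟨z, hz, hzq⟩ := hq 0 le_rfl
    have hsub := abs_sub_le_intervalIntegral_abs_deriv (hv.of_le (by simp)) hx hz
    have htri : |v x| ≤ |v z| + |v x - v z| := by simpa using abs_add_le (v z) (v x - v z)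
    simp only [zero_add, Finset.range_one, Finset.sum_singleton, pow_zero, mul_one, one_mul,
      iteratedDeriv_one, iteratedDeriv_zero] at hzq ⊢
    linarith
  | succ k ih =>
    obtain ⟨z, hz, hzq⟩ := hq 0 (Nat.zero_le _)
    rw [iteratedDeriv_zero] at hzq
    have htri : |v x| ≤ |v z| + |v x - v z| := by simpa using abs_add_le (v z) (v x - v z)
    set Y := ∑ j ∈ Finset.range (k + 1), q (j + 1) * (b - a) ^ j +
      (b - a) ^ k * ∫ y in a..b, |iteratedDeriv (k + 1 + 1) v y| with hY
    have hderiv_le : ∀ y ∈ Icc a b, ‖deriv v y‖ ≤ Y := fun y hy => by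
      rw [hY, iteratedDeriv_succ' (n := k + 1)]
      refine ih (q := fun j => q (j + 1)) (contDiff_succ_iff_deriv.1 hv).2.2 (fun j hj => ?_) hy
      simpa only [← iteratedDeriv_succ'] using hq (j + 1) (by omega)
    have hlip : |v x - v z| ≤ Y * (b - a) := by
      refine ((convex_Icc a b).norm_image_sub_le_of_norm_deriv_le
        (fun y _ => hv.differentiable (by simp) y) hderiv_le hz hx).trans ?_
      gcongr
      · exact (norm_nonneg _).trans (hderiv_le x hx)
      · exact abs_sub_le_iff.2 ⟨by linarith [hx.2, hz.1], by linarith [hx.1, hz.2]⟩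
    have hsum : ∑ j ∈ Finset.range (k + 1), q (j + 1) * (b - a) ^ (j + 1) =
        (∑ j ∈ Finset.range (k + 1), q (j + 1) * (b - a) ^ j) * (b - a) := by
      rw [Finset.sum_mul]
      exact Finset.sum_congr rfl fun j _ => by ring
    rw [hY, add_mul] at hlip
    rw [Finset.sum_range_succ', hsum, pow_succ (b - a) k, pow_zero, mul_one]
    linarith

lemma exists_abs_le_div_mul_intervalIntegral_add (k : ℕ) : ∃ C > 0, ∀ v : ℝ → ℝ,
    ContDiff ℝ (k + 1) v → ∀ a b : ℝ, a < b → ∀ x ∈ Icc a b,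
      |v x| ≤ C / (b - a) * (∫ y in a..b, |v y|) +
        (b - a) ^ k * ∫ y in a..b, |iteratedDeriv (k + 1) v y| := by
  choose C hCpos hC using exists_abs_iteratedDeriv_mul_pow_le
  refine ⟨∑ j ∈ Finset.range (k + 1), C j, Finset.sum_pos (fun j _ => hCpos j) (by simp),
    fun v hv a b hab x hx => ?_⟩
  have hpos : 0 < b - a := sub_pos.2 hab
  have hq : ∀ j ≤ k, ∃ z ∈ Icc a b,
      |iteratedDeriv j v z| ≤ (C j * ∫ y in a..b, |v y|) / (b - a) ^ (j + 1) := fun j hj => by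
    obtain ⟨z, hz, hle⟩ := hC j v (hv.of_le (by exact_mod_cast hj.trans k.le_succ)) a b hab
    exact ⟨z, hz, (le_div_iff₀ (by positivity)).2 hle⟩
  refine (abs_le_sum_mul_pow_add_pow_mul_intervalIntegral hv hq hx).trans_eq ?_
  rw [Finset.sum_div, Finset.sum_mul]
  congr 1
  refine Finset.sum_congr rfl fun j _ => ?_
  rw [pow_succ]
  field_simp

end Interpolation

section PeriodicInterpolation

variable {v : ℝ → ℝ} {P : ℝ} {p : ℝ≥0∞}

lemma periodic_iteratedDeriv (hv : Function.Periodic v P) (j : ℕ) :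
    Function.Periodic (iteratedDeriv j v) P := fun x => by
  rw [← congrFun (iteratedDeriv_comp_add_const j v P) x, hv.funext]

lemma exists_iteratedDeriv_succ_eq_zero_of_periodic {j : ℕ} (hP : 0 < P)
    (hv : Function.Periodic v P) (hcont : Continuous (iteratedDeriv j v)) :
    ∃ z ∈ Icc 0 P, iteratedDeriv (j + 1) v z = 0 := by
  obtain ⟨z, hz, hz0⟩ := exists_deriv_eq_zero hP hcont.continuousOn
    (by simpa using (periodic_iteratedDeriv hv j 0).symm)
  exact ⟨z, Ioo_subset_Icc_self hz, by rwa [iteratedDeriv_succ]⟩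

lemma toReal_one_div_le_one (hp : 1 ≤ p) : (1 / p).toReal ≤ 1 := by
  simpa using ENNReal.toReal_mono ENNReal.one_ne_top (ENNReal.inv_le_one.2 hp)

lemma pow_mul_intervalIntegral_abs_iteratedDeriv_le {k m : ℕ} (hp : 1 ≤ p)
    (hv : Continuous (iteratedDeriv m v)) {a h : ℝ} (hh : 0 < h) (ha : 0 ≤ a) (hah : a + h ≤ 1) :
    h ^ k * ∫ y in a..(a + h), |iteratedDeriv m v y| ≤
      h ^ ((k : ℝ) + 1 - (1 / p).toReal) * sobLp m p v := by
  have hle := intervalIntegral_abs_iteratedDeriv_le hp hv ha (by linarith) hah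
  rw [add_sub_cancel_left] at hle
  refine (mul_le_mul_of_nonneg_left hle (by positivity)).trans_eq ?_
  rw [← mul_assoc, ← Real.rpow_natCast, ← Real.rpow_add hh, add_sub_assoc]

lemma abs_le_sobLp_of_exists_eq_zero {k : ℕ} (hp : 1 ≤ p) (hv : ContDiff ℝ (k + 1) v)
    (hper : Function.Periodic v 1) (hzero : ∃ z ∈ Icc (0 : ℝ) 1, v z = 0) {x : ℝ}
    (hx : x ∈ Icc (0 : ℝ) 1) : |v x| ≤ sobLp (k + 1) p v := by
  have hq : ∀ j ≤ k, ∃ z ∈ Icc (0 : ℝ) 1, |iteratedDeriv j v z| ≤ (fun _ => 0 : ℕ → ℝ) j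
    | 0, _ => by simpa using hzero
    | j + 1, hj => by
      simpa using exists_iteratedDeriv_succ_eq_zero_of_periodic one_pos hper
        (hv.continuous_iteratedDeriv j (by exact_mod_cast (by omega : j ≤ k + 1)))
  have hcont : Continuous (iteratedDeriv (k + 1) v) := hv.continuous_iteratedDeriv _ le_rfl
  calc |v x| ≤ ∫ y in (0 : ℝ)..1, |iteratedDeriv (k + 1) v y| := by
        simpa using abs_le_sum_mul_pow_add_pow_mul_intervalIntegral hv hq hx
    _ = sobLp (k + 1) 1 v := (sobLp_one_eq_integral hcont).symm
    _ ≤ sobLp (k + 1) p v := sobLp_one_le_sobLp hp hcont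

theorem exists_sobLp_zero_top_le_div_mul_add (k : ℕ) : ∃ C > 0, ∀ p : ℝ≥0∞, 1 ≤ p →
    ∀ v : ℝ → ℝ, ContDiff ℝ (k + 1) v → Function.Periodic v 1 →
      (∃ z ∈ Icc (0 : ℝ) 1, v z = 0) → ∀ h > 0,
        sobLp 0 ⊤ v ≤
          C / h * sobLp 0 1 v + h ^ ((k : ℝ) + 1 - (1 / p).toReal) * sobLp (k + 1) p v := by
  obtain ⟨C, hC, hlocal⟩ := exists_abs_le_div_mul_intervalIntegral_add k
  refine ⟨C, hC, fun p hp v hv hper hzero h hh => ?_⟩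
  have hnn : 0 ≤ C / h * sobLp 0 1 v := mul_nonneg (by positivity) sobLp_nonneg
  refine sobLp_top_le (add_nonneg hnn (mul_nonneg (by positivity) sobLp_nonneg)) fun x hx => ?_
  rw [iteratedDeriv_zero]
  rcases le_total h 1 with h1 | h1
  · obtain ⟨a, ha0, ha1, hxa⟩ : ∃ a, 0 ≤ a ∧ a + h ≤ 1 ∧ x ∈ Icc a (a + h) := by
      rcases le_total x (1 - h) with hx1 | hx1
      · exact ⟨x, hx.1, by linarith, le_rfl, by linarith⟩
      · exact ⟨1 - h, by linarith, by linarith, hx1, by linarith [hx.2]⟩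
    have hx_le := hlocal v hv a (a + h) (by linarith) x hxa
    rw [add_sub_cancel_left] at hx_le
    have hint : ∫ y in a..(a + h), |v y| ≤ sobLp 0 1 v := by
      rw [sobLp_one_eq_integral (by simpa using hv.continuous), iteratedDeriv_zero]
      exact intervalIntegral.integral_mono_interval ha0 (by linarith) ha1
        (.of_forall fun _ => abs_nonneg _) (hv.continuous.abs.intervalIntegrable _ _)
    exact hx_le.trans (add_le_add (by gcongr) (pow_mul_intervalIntegral_abs_iteratedDeriv_le hp
      (hv.continuous_iteratedDeriv _ le_rfl) hh ha0 ha1))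
  · have hexp : 0 ≤ (k : ℝ) + 1 - (1 / p).toReal := by
      linarith [toReal_one_div_le_one hp, (Nat.cast_nonneg k : (0 : ℝ) ≤ k)]
    calc |v x| ≤ 1 * sobLp (k + 1) p v := by
          rw [one_mul]; exact abs_le_sobLp_of_exists_eq_zero hp hv hper hzero hx
      _ ≤ h ^ ((k : ℝ) + 1 - (1 / p).toReal) * sobLp (k + 1) p v :=
          mul_le_mul_of_nonneg_right (Real.one_le_rpow h1 hexp) sobLp_nonneg
      _ ≤ _ := le_add_of_nonneg_left hnn

end PeriodicInterpolation

section LowerBounds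

variable {v : ℝ → ℝ} {p : ℝ≥0∞} {B E M c ν : ℝ}

lemma mul_rpow_le_sobLp_zero (hp : 1 ≤ p) (hv : Continuous v) (hE : 0 < E) (hB : 0 < B)
    (hM : 0 < M) (h2 : E ≤ sobLp 0 2 v ^ 2) (h1 : sobLp 0 1 v ≤ B) (htop : sobLp 0 ⊤ v ≤ M) :
    E / (2 * B) * (E / (2 * M ^ 2)) ^ (1 / p).toReal ≤ sobLp 0 p v := by
  have hv0 : Continuous (iteratedDeriv 0 v) := by simpa using hv
  set μ := volume.restrict (Ioc (0 : ℝ) 1)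
  set s := E / (2 * B) with hs
  have hspos : 0 < s := by positivity
  have hbound : ∀ᵐ x ∂μ, |v x| ≤ M := (ae_restrict_mem measurableSet_Ioc).mono fun x hx => by
    simpa using (abs_iteratedDeriv_le_sobLp_top hv0 (Ioc_subset_Icc_self hx)).trans htop
  have hint : ∫ x, |v x| ∂μ ≤ B := by
    simpa [sobLp_one_eq_integral hv0, intervalIntegral.integral_of_le] using h1
  have hE_le : E ≤ s * ∫ x, |v x| ∂μ + M ^ 2 * μ.real {x | s ≤ |v x|} := by
    refine h2.trans (le_trans (le_of_eq ?_)
      (integral_sq_le_mul_integral_abs_add hv.measurable hspos.le hbound))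
    simp [sobLp_two_sq_eq_integral hv0, intervalIntegral.integral_of_le, μ]
  have hlarge : E / (2 * M ^ 2) ≤ μ.real {x | s ≤ |v x|} := by
    have hsB : s * ∫ x, |v x| ∂μ ≤ E / 2 := by
      refine (mul_le_mul_of_nonneg_left hint hspos.le).trans_eq ?_
      rw [hs]; field_simp
    rw [div_le_iff₀ (by positivity)]
    linarith
  have hmem := memLp_restrict_Ioc_of_continuousOn (hv.continuousOn (s := Icc 0 1)) p
  rw [sobLp_eq_lpNorm hv0, iteratedDeriv_zero]
  refine le_trans ?_ (mul_rpow_measureReal_le_lpNorm (zero_lt_one.trans_le hp).ne' hmem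
    hv.measurable hspos (lt_of_lt_of_le (by positivity) hlarge))
  gcongr

lemma exists_mul_rpow_le_sobLp_succ (k : ℕ) : ∃ C > 0, ∀ p : ℝ≥0∞, 1 ≤ p → ∀ v : ℝ → ℝ,
    ContDiff ℝ (k + 1) v → Function.Periodic v 1 → (∃ z ∈ Icc (0 : ℝ) 1, v z = 0) →
      ∀ E > 0, ∀ B > 0, E ≤ sobLp 0 2 v ^ 2 → sobLp 0 1 v ≤ B →
        E / (2 * B) * (C * E / B ^ 2) ^ ((k : ℝ) + 1 - (1 / p).toReal) ≤ sobLp (k + 1) p v := by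
  obtain ⟨C, hC, hGN⟩ := exists_sobLp_zero_top_le_div_mul_add k
  refine ⟨1 / (2 * C), by positivity, fun p hp v hv hper hzero E hE B hB h2 h1 => ?_⟩
  -- At this scale the `L¹` term of the interpolation inequality is half of the lower bound
  -- `E / B` for the supremum.
  set h := 2 * C * B ^ 2 / E with hh
  have hpos : 0 < h := by positivity
  have hsup : E / B ≤ sobLp 0 ⊤ v := by
    rw [div_le_iff₀ hB]
    have hhol := sobLp_two_sq_le_mul (m := 0) (by simpa using hv.continuous)
    nlinarith [sobLp_nonneg (m := 0) (p := ⊤) (v := v)]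
  have hhalf : C / h * sobLp 0 1 v ≤ E / (2 * B) := by
    refine (mul_le_mul_of_nonneg_left h1 (by positivity)).trans_eq ?_
    rw [hh]; field_simp
  have hinv : 1 / (2 * C) * E / B ^ 2 = h⁻¹ := by rw [hh]; field_simp
  have hdouble : E / B = 2 * (E / (2 * B)) := by field_simp
  rw [hinv, Real.inv_rpow hpos.le, ← div_eq_mul_inv, div_le_iff₀' (by positivity)]
  linarith [hGN p hp v hv hper hzero h hpos]

lemma mul_rpow_neg_le_sobLp_zero (hp : 1 ≤ p) (hv : Continuous v) (hν : 0 < ν) (hc : 0 < c)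
    (hB : 0 < B) (hM : 0 < M) (h2 : c ≤ ν * sobLp 0 2 v ^ 2) (h1 : sobLp 0 1 v ≤ B)
    (htop : ν * sobLp 0 ⊤ v ≤ M) :
    c / (2 * B) * (c / (2 * M ^ 2)) ^ (1 / p).toReal * ν ^ (-(1 - (1 / p).toReal))
      ≤ sobLp 0 p v := by
  refine le_trans (le_of_eq ?_) (mul_rpow_le_sobLp_zero hp hv (div_pos hc hν) hB
    (div_pos hM hν) ((div_le_iff₀' hν).2 h2) h1 ((le_div_iff₀' hν).2 htop))
  have hscale : c / ν / (2 * (M / ν) ^ 2) = c / (2 * M ^ 2) * ν := by field_simp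
  have hν_pow : ν ^ (-(1 - (1 / p).toReal)) = ν⁻¹ * ν ^ (1 / p).toReal := by
    rw [neg_sub, sub_eq_neg_add, Real.rpow_add hν, Real.rpow_neg_one]
  rw [hscale, Real.mul_rpow (by positivity) hν.le, hν_pow]
  field_simp

lemma exists_mul_rpow_neg_le_sobLp_succ_of_exists_eq_zero (k : ℕ) (hp : 1 ≤ p) (hc : 0 < c)
    (hB : 0 < B) : ∃ κ > 0, ∀ ν > 0, ∀ v : ℝ → ℝ, ContDiff ℝ (k + 1) v →
      Function.Periodic v 1 → (∃ z ∈ Icc (0 : ℝ) 1, v z = 0) → c ≤ ν * sobLp 0 2 v ^ 2 →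
        sobLp 0 1 v ≤ B → κ * ν ^ (-((k : ℝ) + 2 - (1 / p).toReal)) ≤ sobLp (k + 1) p v := by
  obtain ⟨C, hC, hlower⟩ := exists_mul_rpow_le_sobLp_succ k
  set γ := (k : ℝ) + 1 - (1 / p).toReal with hγ
  refine ⟨c / (2 * B) * (C * c / B ^ 2) ^ γ, by positivity,
    fun ν hν v hv hper hzero h2 h1 => le_trans (le_of_eq ?_) (hlower p hp v hv hper hzero (c / ν)
      (div_pos hc hν) B hB ((div_le_iff₀' hν).2 h2) h1)⟩
  have hscale : C * (c / ν) / B ^ 2 = C * c / B ^ 2 * ν⁻¹ := by field_simp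
  have hν_pow : ν ^ (-((k : ℝ) + 2 - (1 / p).toReal)) = ν⁻¹ * ν⁻¹ ^ γ := by
    rw [Real.inv_rpow hν.le, ← Real.rpow_neg hν.le, ← Real.rpow_neg_one, ← Real.rpow_add hν]
    congr 1
    rw [hγ]
    ring
  rw [← hγ, hscale, Real.mul_rpow (by positivity) (by positivity), hν_pow]
  field_simp

lemma exists_mul_rpow_neg_le_sobLp_succ (m : ℕ) (hp : 1 ≤ p) (hc : 0 < c) (hB : 0 < B)
    (hM : 0 < M) : ∃ κ > 0, ∀ ν > 0, ∀ v : ℝ → ℝ, ContDiff ℝ (m + 1) v →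
      Function.Periodic v 1 → c ≤ ν * sobLp 1 2 v ^ 2 → sobLp 1 1 v ≤ B →
        ν * sobLp 1 ⊤ v ≤ M → κ * ν ^ (-((m : ℝ) + 1 - (1 / p).toReal)) ≤ sobLp (m + 1) p v := by
  simp only [← sobLp_deriv (v := _)]
  rcases m with _ | k
  · refine ⟨c / (2 * B) * (c / (2 * M ^ 2)) ^ (1 / p).toReal, by positivity,
      fun ν hν v hv _ h2 h1 htop => ?_⟩
    rw [Nat.cast_zero, zero_add]
    exact mul_rpow_neg_le_sobLp_zero hp (hv.continuous_deriv (by simp)) hν hc hB hM h2 h1 htop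
  · obtain ⟨κ, hκ, hlower⟩ := exists_mul_rpow_neg_le_sobLp_succ_of_exists_eq_zero k hp hc hB
    refine ⟨κ, hκ, fun ν hν v hv hper h2 h1 _ => ?_⟩
    have hper' : Function.Periodic (deriv v) 1 := by
      simpa using periodic_iteratedDeriv hper 1
    have hzero : ∃ z ∈ Icc (0 : ℝ) 1, deriv v z = 0 := by
      simpa using exists_iteratedDeriv_succ_eq_zero_of_periodic (j := 0) one_pos hper
        (by simpa using hv.continuous)
    have hexp : ((k + 1 : ℕ) : ℝ) + 1 = k + 2 := by push_cast; ring
    rw [hexp]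
    exact hlower ν hν _ (contDiff_succ_iff_deriv.1 hv).2.2 hper' hzero h2 h1

end LowerBounds

section TimeAverage

variable {T₁ T₂ c C : ℝ} {g : ℝ → ℝ}

lemma mul_timeAvg_sub_le {A : ℝ → ℝ} {a : ℝ} (hT : T₁ < T₂) (hg : ContinuousOn g (Icc T₁ T₂))
    (hA : ContinuousOn A (Icc T₁ T₂)) (ha : 0 ≤ a) (hc : 0 ≤ c) (hC : 0 ≤ C)
    (hgC : ∀ t ∈ Icc T₁ T₂, g t ≤ C) (hA0 : ∀ t ∈ Icc T₁ T₂, 0 ≤ A t)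
    (haA : ∀ t ∈ Icc T₁ T₂, c ≤ g t → a ≤ A t) :
    a * (timeAvg T₁ T₂ g - c) ≤ C * timeAvg T₁ T₂ A := by
  have hlen : 0 < T₂ - T₁ := sub_pos.2 hT
  have hgi : IntervalIntegrable g volume T₁ T₂ := hg.intervalIntegrable_of_Icc hT.le
  have hAi : IntervalIntegrable A volume T₁ T₂ := hA.intervalIntegrable_of_Icc hT.le
  have hpointwise : ∀ t ∈ Icc T₁ T₂, a * (g t - c) ≤ C * A t := fun t ht => by
    rcases le_total c (g t) with h | h
    · exact (mul_le_mul_of_nonneg_left (by linarith [hgC t ht]) ha).trans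
        ((mul_le_mul_of_nonneg_right (haA t ht h) hC).trans_eq (mul_comm _ _))
    · exact (mul_nonpos_of_nonneg_of_nonpos ha (sub_nonpos.2 h)).trans (mul_nonneg hC (hA0 t ht))
  have hint := intervalIntegral.integral_mono_on hT.le
    ((hgi.sub intervalIntegrable_const).const_mul a) (hAi.const_mul C) hpointwise
  rw [intervalIntegral.integral_const_mul, intervalIntegral.integral_const_mul,
    intervalIntegral.integral_sub hgi intervalIntegrable_const, intervalIntegral.integral_const,
    smul_eq_mul] at hint
  calc a * (timeAvg T₁ T₂ g - c)
      = (T₂ - T₁)⁻¹ * (a * ((∫ t in T₁..T₂, g t) - (T₂ - T₁) * c)) := by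
        rw [timeAvg]; field_simp
    _ ≤ (T₂ - T₁)⁻¹ * (C * ∫ t in T₁..T₂, A t) := by gcongr
    _ = C * timeAvg T₁ T₂ A := by rw [timeAvg]; ring

lemma rpow_mul_le_timeAvg_rpow {N : ℝ → ℝ} {α X : ℝ} (hT : T₁ < T₂) (hα : 0 < α)
    (hg : ContinuousOn g (Icc T₁ T₂)) (hN : ContinuousOn N (Icc T₁ T₂)) (hX : 0 ≤ X)
    (hc : 0 < c) (hC : 0 < C) (hgC : ∀ t ∈ Icc T₁ T₂, g t ≤ C)
    (hN0 : ∀ t ∈ Icc T₁ T₂, 0 ≤ N t) (hXN : ∀ t ∈ Icc T₁ T₂, c ≤ g t → X ≤ N t)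
    (hcg : 2 * c ≤ timeAvg T₁ T₂ g) :
    (c / C) ^ (1 / α) * X ≤ timeAvg T₁ T₂ (fun t => N t ^ α) ^ (1 / α) := by
  have hle := mul_timeAvg_sub_le (A := fun t => N t ^ α) (a := X ^ α) hT hg
    (hN.rpow_const fun _ _ => .inr hα.le) (by positivity) hc.le hC.le hgC
    (fun t ht => Real.rpow_nonneg (hN0 t ht) α)
    (fun t ht h => Real.rpow_le_rpow hX (hXN t ht h) hα.le)
  calc (c / C) ^ (1 / α) * X = (c / C * X ^ α) ^ (1 / α) := by
        rw [Real.mul_rpow (by positivity) (by positivity), ← Real.rpow_mul hX,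
          mul_one_div_cancel hα.ne', Real.rpow_one]
    _ ≤ _ := by
        refine Real.rpow_le_rpow (by positivity) ?_ (by positivity)
        rw [div_mul_eq_mul_div, div_le_iff₀' hC, mul_comm]
        exact (mul_le_mul_of_nonneg_left (by linarith) (by positivity)).trans hle

end TimeAverage

section Calculus

variable {v : ℝ → ℝ} {a b L P z : ℝ}

lemma exists_eq_zero_of_intervalIntegral_eq_zero (hab : a ≠ b) (hv : ContinuousOn v (uIcc a b))
    (hint : ∫ x in a..b, v x = 0) : ∃ y, v y = 0 := by
  obtain ⟨y, -, hy⟩ := exists_eq_interval_average hab hv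
  exact ⟨y, by rw [hy, interval_average_eq, hint, smul_zero]⟩

lemma abs_le_mul_of_periodic_of_deriv_le (hP : 0 < P) (hper : Function.Periodic v P)
    (hv : Differentiable ℝ v) (hL : ∀ x, deriv v x ≤ L) (hz : v z = 0) (x : ℝ) :
    |v x| ≤ L * P := by
  have hgrowth : ∀ {y₁ y₂}, y₁ ≤ y₂ → v y₂ - v y₁ ≤ L * (y₂ - y₁) :=
    fun h => image_sub_le_mul_sub_of_deriv_le hv hL h
  have hLP : 0 ≤ L * P := by simpa [hper x] using hgrowth (le_add_of_nonneg_right hP.le : x ≤ x + P)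
  have : 0 ≤ L := nonneg_of_mul_nonneg_left hLP hP
  obtain ⟨y, hy, hzy⟩ := hper.exists_mem_Ico hP z x
  have hleft := hgrowth hy.1
  have hright := hgrowth hy.2.le
  rw [hper x] at hright
  rw [abs_le]
  constructor <;> nlinarith [hy.1, hy.2]

lemma intervalIntegral_abs_le_of_intervalIntegral_eq_zero (hab : a ≤ b) (hL : 0 ≤ L)
    (hv : IntervalIntegrable v volume a b) (hle : ∀ x ∈ Icc a b, v x ≤ L)
    (hint : ∫ x in a..b, v x = 0) : ∫ x in a..b, |v x| ≤ 2 * L * (b - a) :=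
  calc ∫ x in a..b, |v x| ≤ ∫ x in a..b, (2 * L - v x) := by
        refine intervalIntegral.integral_mono_on hab hv.abs
          (intervalIntegrable_const.sub hv) fun x hx => ?_
        have := hle x hx
        exact abs_le.2 ⟨by linarith, by linarith⟩
    _ = 2 * L * (b - a) := by
        rw [intervalIntegral.integral_sub intervalIntegrable_const hv, hint]
        rw [intervalIntegral.integral_const, smul_eq_mul, sub_zero, mul_comm]

lemma intervalIntegral_comp_mul_deriv_eq_zero {g v' : ℝ → ℝ} (hv : ∀ x, HasDerivAt v (v' x) x)
    (hv' : Continuous v') (hg : Continuous g) (hab : v a = v b) :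
    ∫ x in a..b, g (v x) * v' x = 0 := by
  have := intervalIntegral.integral_comp_mul_deriv (a := a) (b := b) (fun x _ => hv x)
    hv'.continuousOn hg
  rwa [hab, intervalIntegral.integral_same] at this

lemma intervalIntegral_sub_eq_of_hasDerivAt {w w' : ℝ → ℝ → ℝ} {s T : ℝ} (hsT : s ≤ T)
    (hab : a ≤ b) (hw : ContinuousOn (Function.uncurry w) (Icc s T ×ˢ Icc a b))
    (hw' : ContinuousOn (Function.uncurry w') (Icc s T ×ˢ Icc a b))
    (hderiv : ∀ t ∈ Ioo s T, ∀ x ∈ Icc a b, HasDerivAt (fun r => w r x) (w' t x) t) :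
    (∫ x in a..b, w T x) - ∫ x in a..b, w s x = ∫ t in s..T, ∫ x in a..b, w' t x := by
  have hslice : ∀ {g : ℝ → ℝ → ℝ}, ContinuousOn (Function.uncurry g) (Icc s T ×ˢ Icc a b) →
      ∀ t ∈ Icc s T, IntervalIntegrable (g t) volume a b := fun hg t ht =>
    ContinuousOn.intervalIntegrable_of_Icc hab <|
      hg.comp (f := fun x => (t, x)) (by fun_prop) fun x hx => ⟨ht, hx⟩
  have hftc : ∀ x ∈ Icc a b, ∫ t in s..T, w' t x = w T x - w s x := fun x hx =>
    have hmaps : MapsTo (fun t => (t, x)) (Icc s T) (Icc s T ×ˢ Icc a b) := fun t ht => ⟨ht, hx⟩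
    intervalIntegral.integral_eq_sub_of_hasDerivAt_of_le (f := fun t => w t x) hsT
      (hw.comp (by fun_prop) hmaps) (fun t ht => hderiv t ht x hx)
      ((hw'.comp (by fun_prop) hmaps).intervalIntegrable_of_Icc hsT)
  have hswap : ∫ t in s..T, ∫ x in a..b, w' t x = ∫ x in a..b, ∫ t in s..T, w' t x := by
    refine intervalIntegral_intervalIntegral_swap
      ((hw'.integrableOn_compact (isCompact_Icc.prod isCompact_Icc)).mono_set ?_)
    rw [uIoc_of_le hsT, uIoc_of_le hab]
    exact prod_mono Ioc_subset_Icc_self Ioc_subset_Icc_self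
  rw [hswap, ← intervalIntegral.integral_sub (hslice hw T (right_mem_Icc.2 hsT))
    (hslice hw s (left_mem_Icc.2 hsT))]
  refine (intervalIntegral.integral_congr fun x hx => hftc x ?_).symm
  rwa [uIcc_of_le hab] at hx

end Calculus

/-- The viscous flux `f(u) - ν u_x`: the generalised Burgers equation is the conservation law
`u_t + (f(u) - ν u_x)_x = 0`. -/
noncomputable def viscousFlux (f : ℝ → ℝ) (ν : ℝ) (u : ℝ → ℝ → ℝ) (t x : ℝ) : ℝ :=
  f (u t x) - ν * deriv (u t) x

namespace IsBurgersSolution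

variable {f : ℝ → ℝ} {σ ν t Ct T₁ T₂ : ℝ} {u : ℝ → ℝ → ℝ}

section Regularity

lemma contDiff (h : IsBurgersSolution f σ ν u) (ht : 0 ≤ t) : ContDiff ℝ (⊤ : ℕ∞) (u t) :=
  contDiff_right_of_contDiffOn_uncurry h.hu ht

lemma continuous_iteratedDeriv (h : IsBurgersSolution f σ ν u) (ht : 0 ≤ t) (k : ℕ) :
    Continuous (iteratedDeriv k (u t)) :=
  (h.contDiff ht).continuous_iteratedDeriv k (by exact_mod_cast le_top)

lemma continuousOn_uncurry_iteratedDeriv (h : IsBurgersSolution f σ ν u) (k : ℕ) :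
    ContinuousOn (Function.uncurry fun t => iteratedDeriv k (u t)) (Ici 0 ×ˢ univ) :=
  (contDiffOn_uncurry_iteratedDeriv (m := 0) (k := k) (uniqueDiffOn_Ici 0) h.hu
    (by rw [zero_add]; exact_mod_cast le_top)).continuousOn

lemma continuousOn_uncurry_deriv (h : IsBurgersSolution f σ ν u) :
    ContinuousOn (Function.uncurry fun t => deriv (u t)) (Ici 0 ×ˢ univ) := by
  simpa only [iteratedDeriv_one] using h.continuousOn_uncurry_iteratedDeriv 1

lemma contDiff_deriv (h : IsBurgersSolution f σ ν u) (ht : 0 ≤ t) :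
    ContDiff ℝ (⊤ : ℕ∞) (deriv (u t)) :=
  (contDiff_infty_iff_deriv.1 (h.contDiff ht)).2

lemma hasDerivAt (h : IsBurgersSolution f σ ν u) (ht : 0 ≤ t) (x : ℝ) :
    HasDerivAt (u t) (deriv (u t) x) x :=
  ((h.contDiff ht).differentiable (by simp) x).hasDerivAt

lemma hasDerivAt_deriv (h : IsBurgersSolution f σ ν u) (ht : 0 ≤ t) (x : ℝ) :
    HasDerivAt (deriv (u t)) (deriv (deriv (u t)) x) x :=
  ((h.contDiff_deriv ht).differentiable (by simp) x).hasDerivAt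

lemma hasDerivAt_nonlinearity (h : IsBurgersSolution f σ ν u) (y : ℝ) :
    HasDerivAt f (deriv f y) y :=
  (h.hf.differentiable (by simp) y).hasDerivAt

lemma periodic_viscousFlux (h : IsBurgersSolution f σ ν u) (t : ℝ) :
    Function.Periodic (viscousFlux f ν u t) 1 := fun x => by
  have hderiv : deriv (u t) (x + 1) = deriv (u t) x := by
    simpa only [iteratedDeriv_one] using periodic_iteratedDeriv (h.hper t) 1 x
  rw [viscousFlux, viscousFlux, h.hper, hderiv]

lemma continuousOn_uncurry_viscousFlux (h : IsBurgersSolution f σ ν u) :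
    ContinuousOn (Function.uncurry (viscousFlux f ν u)) (Ici 0 ×ˢ univ) :=
  (h.hf.continuous.comp_continuousOn h.hu.continuousOn).sub
    (h.continuousOn_uncurry_deriv.const_mul ν)

lemma hasDerivAt_viscousFlux (h : IsBurgersSolution f σ ν u) (ht : 0 ≤ t) (x : ℝ) :
    HasDerivAt (viscousFlux f ν u t)
      (deriv f (u t x) * deriv (u t) x - ν * deriv (deriv (u t)) x) x :=
  ((h.hasDerivAt_nonlinearity _).comp x (h.hasDerivAt ht x)).sub
    ((h.hasDerivAt_deriv ht x).const_mul ν)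

lemma deriv_deriv_viscousFlux (h : IsBurgersSolution f σ ν u) (ht : 0 ≤ t) (x : ℝ) :
    deriv (deriv (viscousFlux f ν u t)) x = iteratedDeriv 2 f (u t x) * deriv (u t) x ^ 2
      + deriv f (u t x) * deriv (deriv (u t)) x - ν * deriv (deriv (deriv (u t))) x := by
  have hf' : HasDerivAt (deriv f) (iteratedDeriv 2 f (u t x)) (u t x) := by
    rw [iteratedDeriv_succ, iteratedDeriv_one]
    exact ((contDiff_infty_iff_deriv.1 h.hf).2.differentiable (by simp) _).hasDerivAt
  have hu''' : HasDerivAt (deriv (deriv (u t))) (deriv (deriv (deriv (u t))) x) x :=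
    ((contDiff_infty_iff_deriv.1 (h.contDiff_deriv ht)).2.differentiable (by simp) _).hasDerivAt
  rw [funext fun y => (h.hasDerivAt_viscousFlux ht y).deriv]
  refine ((((hf'.comp x (h.hasDerivAt ht x)).mul (h.hasDerivAt_deriv ht x)).sub
    (hu'''.const_mul ν)).congr_deriv ?_).deriv
  rw [Function.comp_apply]
  ring

lemma contDiffAt_uncurry (h : IsBurgersSolution f σ ν u) (ht : 0 < t) (x : ℝ) :
    ContDiffAt ℝ (⊤ : ℕ∞) (Function.uncurry u) (t, x) :=
  h.hu.contDiffAt (prod_mem_nhds (Ici_mem_nhds ht) Filter.univ_mem)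

lemma hasDerivAt_time (h : IsBurgersSolution f σ ν u) (ht : 0 < t) (x : ℝ) :
    HasDerivAt (fun s => u s x) (-deriv (viscousFlux f ν u t) x) t := by
  have hpde : -deriv (viscousFlux f ν u t) x = deriv (fun s => u s x) t := by
    rw [(h.hasDerivAt_viscousFlux ht.le x).deriv]
    linarith [h.hpde t ht x]
  rw [hpde]
  exact (hasDerivAt_left_of_hasFDerivAt_uncurry ((h.contDiffAt_uncurry ht x).differentiableAt
    (by simp)).hasFDerivAt).differentiableAt.hasDerivAt

lemma hasDerivAt_deriv_time (h : IsBurgersSolution f σ ν u) (ht : 0 < t) (x : ℝ) :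
    HasDerivAt (fun s => deriv (u s) x) (-deriv (deriv (viscousFlux f ν u t)) x) t := by
  have := hasDerivAt_deriv_right_of_contDiffAt
    ((h.contDiffAt_uncurry ht x).of_le (WithTop.coe_le_coe.2 le_top))
  rwa [funext fun y => (h.hasDerivAt_time ht y).deriv, deriv.fun_neg] at this

end Regularity

section MaximumPrinciple

lemma deriv_le (h : IsBurgersSolution f σ ν u) (ht : 0 < t) (x : ℝ) :
    deriv (u t) x ≤ (σ * t)⁻¹ := by
  have hσ := h.hσ
  have hle : t * deriv (u t) x ≤ σ⁻¹ := by
    refine weak_maximum_principle (Z := fun t x => t * deriv (u t) x) one_pos ht.le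
      ((continuous_fst.continuousOn.mul h.continuousOn_uncurry_deriv).mono
        (prod_mono Icc_subset_Ici_self subset_rfl)) (fun s _ y => ?_) (by simp [hσ.le])
      (fun s hs y hlarge hcrit hmax => ?_) x
    · simpa only [iteratedDeriv_one] using
        congrArg (s * ·) (periodic_iteratedDeriv (h.hper s) 1 y)
    have hs0 : 0 < s := hs.1
    simp only [deriv_const_mul_field'] at hcrit hmax
    have hxx : deriv (deriv (u s)) y = 0 := (mul_eq_zero.1 hcrit).resolve_left hs0.ne'
    have hxxx : ν * (s * deriv (deriv (deriv (u s))) y) ≤ 0 :=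
      mul_nonpos_of_nonneg_of_nonpos h.hν.le hmax
    refine ⟨_, ?_, (hasDerivAt_id s).mul (h.hasDerivAt_deriv_time hs0 y)⟩
    rw [h.deriv_deriv_viscousFlux hs0.le, hxx]
    have hpos : 0 < deriv (u s) y := pos_of_mul_pos_right ((inv_pos.2 hσ).trans hlarge) hs0.le
    have hconv : deriv (u s) y ≤ s * (iteratedDeriv 2 f (u s y) * deriv (u s) y ^ 2) := by
      have hone : 1 ≤ iteratedDeriv 2 f (u s y) * (s * deriv (u s) y) :=
        ((inv_lt_iff_one_lt_mul₀' hσ).1 hlarge).le.trans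
          (mul_le_mul_of_nonneg_right (h.hconv _) (by positivity))
      nlinarith
    simp only [id]
    linarith
  rwa [mul_inv, ← div_eq_mul_inv, le_div_iff₀ ht, mul_comm]

lemma viscousFlux_le (h : IsBurgersSolution f σ ν u) {M : ℝ} (ht : 0 ≤ t)
    (hinit : ∀ x, viscousFlux f ν u 0 x ≤ M) (x : ℝ) : viscousFlux f ν u t x ≤ M := by
  refine weak_maximum_principle one_pos ht
    (h.continuousOn_uncurry_viscousFlux.mono (prod_mono Icc_subset_Ici_self subset_rfl))
    (fun s _ => h.periodic_viscousFlux s) hinit (fun s hs y _ hcrit hmax => ?_) x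
  refine ⟨_, ?_, ((h.hasDerivAt_nonlinearity (u s y)).comp s (h.hasDerivAt_time hs.1 y)).sub
    ((h.hasDerivAt_deriv_time hs.1 y).const_mul ν)⟩
  have : ν * deriv (deriv (viscousFlux f ν u s)) y ≤ 0 :=
    mul_nonpos_of_nonneg_of_nonpos h.hν.le hmax
  rw [hcrit]
  linarith

end MaximumPrinciple

section Decay

lemma exists_eq_zero (h : IsBurgersSolution f σ ν u) (ht : 0 ≤ t) : ∃ x, u t x = 0 := by
  refine exists_eq_zero_of_intervalIntegral_eq_zero zero_ne_one
    (h.contDiff ht).continuous.continuousOn ?_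
  rw [intervalIntegral.integral_of_le zero_le_one, h.hmean t ht]

lemma abs_le (h : IsBurgersSolution f σ ν u) (ht : 0 < t) (x : ℝ) : |u t x| ≤ (σ * t)⁻¹ := by
  obtain ⟨z, hz⟩ := h.exists_eq_zero ht.le
  simpa using abs_le_mul_of_periodic_of_deriv_le one_pos (h.hper t)
    ((h.contDiff ht.le).differentiable (by simp)) (h.deriv_le ht) hz x

lemma sobLp_zero_top_le (h : IsBurgersSolution f σ ν u) (ht : 0 < t) :
    sobLp 0 ⊤ (u t) ≤ (σ * t)⁻¹ :=
  sobLp_top_le (inv_nonneg.2 (mul_pos h.hσ ht).le) fun x _ => by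
    simpa only [iteratedDeriv_zero] using h.abs_le ht x

lemma sobLp_one_one_le (h : IsBurgersSolution f σ ν u) (ht : 0 < t) :
    sobLp 1 1 (u t) ≤ 2 * (σ * t)⁻¹ := by
  have hcont : Continuous (deriv (u t)) := (h.contDiff_deriv ht.le).continuous
  have hmean : ∫ x in (0 : ℝ)..1, deriv (u t) x = 0 := by
    rw [intervalIntegral.integral_eq_sub_of_hasDerivAt (fun x _ => h.hasDerivAt ht.le x)
      (hcont.intervalIntegrable _ _)]
    simpa [sub_eq_zero] using h.hper t 0
  rw [sobLp_one_eq_integral (h.continuous_iteratedDeriv ht.le 1)]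
  simpa using intervalIntegral_abs_le_of_intervalIntegral_eq_zero zero_le_one
    (inv_nonneg.2 (mul_pos h.hσ ht).le) (hcont.intervalIntegrable _ _)
    (fun x _ => h.deriv_le ht x) hmean

end Decay

section InitialData

lemma sobLp_zero_one_init_pos (h : IsBurgersSolution f σ ν u) : 0 < sobLp 0 1 (u 0) := by
  rw [sobLp_one_eq_integral (h.continuous_iteratedDeriv le_rfl 0)]
  obtain ⟨x, hx⟩ := h.hinit
  obtain ⟨y, hy, hxy⟩ := Function.Periodic.exists_mem_Ico₀ (h.hper 0) one_pos x
  refine intervalIntegral.integral_pos one_pos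
    (h.continuous_iteratedDeriv le_rfl 0).abs.continuousOn (fun _ _ => abs_nonneg _)
    ⟨y, Ico_subset_Icc_self hy, ?_⟩
  rw [iteratedDeriv_zero, ← hxy]
  exact abs_pos.2 hx

lemma burgersD_pos (h : IsBurgersSolution f σ ν u) : 0 < burgersD u :=
  (inv_pos.2 h.sobLp_zero_one_init_pos).trans_le (le_max_left _ _)

lemma inv_sq_burgersD_le (h : IsBurgersSolution f σ ν u) :
    (burgersD u ^ 2)⁻¹ ≤ sobLp 0 2 (u 0) ^ 2 := by
  have hle : (burgersD u)⁻¹ ≤ sobLp 0 2 (u 0) :=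
    (inv_le_of_inv_le₀ h.sobLp_zero_one_init_pos (le_max_left _ _)).trans
      (sobLp_one_le_sobLp one_le_two (h.continuous_iteratedDeriv le_rfl 0))
  rw [← inv_pow]
  exact pow_le_pow_left₀ (inv_nonneg.2 h.burgersD_pos.le) hle 2

lemma abs_deriv_init_le (h : IsBurgersSolution f σ ν u) (x : ℝ) :
    |deriv (u 0) x| ≤ burgersD u := by
  obtain ⟨y, hy, hxy⟩ :=
    (periodic_iteratedDeriv (h.hper 0) 1).exists_mem_Ico₀ one_pos x
  rw [← iteratedDeriv_one, hxy]
  exact (abs_iteratedDeriv_le_sobLp_top (h.continuous_iteratedDeriv le_rfl 1)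
    (Ico_subset_Icc_self hy)).trans (le_max_right _ _)

lemma abs_init_le (h : IsBurgersSolution f σ ν u) (x : ℝ) : |u 0 x| ≤ burgersD u := by
  obtain ⟨z, hz⟩ := h.exists_eq_zero le_rfl
  simpa using abs_le_mul_of_periodic_of_deriv_le one_pos (h.hper 0)
    ((h.contDiff le_rfl).differentiable (by simp))
    (fun y => (le_abs_self _).trans (h.abs_deriv_init_le y)) hz x

lemma viscousFlux_init_le (h : IsBurgersSolution f σ ν u) {M : ℝ} (hν : ν ≤ 1)
    (hM : ∀ y ∈ Icc (-burgersD u) (burgersD u), |f y| ≤ M) (x : ℝ) :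
    viscousFlux f ν u 0 x ≤ M + burgersD u := by
  have hf : f (u 0 x) ≤ M := (le_abs_self _).trans (hM _ (_root_.abs_le.1 (h.abs_init_le x)))
  have hux : ν * -deriv (u 0) x ≤ 1 * burgersD u :=
    (mul_le_mul_of_nonneg_left ((neg_le_abs _).trans (h.abs_deriv_init_le x)) h.hν.le).trans
      (mul_le_mul_of_nonneg_right hν h.burgersD_pos.le)
  rw [viscousFlux]
  linarith

lemma mul_sobLp_one_top_le (h : IsBurgersSolution f σ ν u) {K M : ℝ} (hν : ν ≤ 1) (ht : 0 < t)
    (hDK : burgersD u ≤ K) (htK : (σ * t)⁻¹ ≤ K) (hM : ∀ y ∈ Icc (-K) K, |f y| ≤ M) :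
    ν * sobLp 1 ⊤ (u t) ≤ K + 2 * M := by
  have hM0 : 0 ≤ M := (abs_nonneg _).trans
    (hM 0 ⟨by linarith [h.burgersD_pos], by linarith [h.burgersD_pos]⟩)
  have hν0 := h.hν
  have hK0 : 0 ≤ K := h.burgersD_pos.le.trans hDK
  rw [mul_comm, ← le_div_iff₀ hν0]
  refine sobLp_top_le (by positivity) fun x _ => ?_
  have hupper : ν * deriv (u t) x ≤ 1 * K :=
    (mul_le_mul_of_nonneg_left ((h.deriv_le ht x).trans htK) hν0.le).trans
      (mul_le_mul_of_nonneg_right hν hK0)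
  have hflux := h.viscousFlux_le ht.le (h.viscousFlux_init_le hν fun y hy =>
    hM y (Icc_subset_Icc (neg_le_neg hDK) hDK hy)) x
  have hf := hM _ (_root_.abs_le.1 ((h.abs_le ht x).trans htK))
  rw [viscousFlux] at hflux
  rw [le_div_iff₀ hν0, iteratedDeriv_one, mul_comm, ← abs_of_pos hν0, ← abs_mul,
    _root_.abs_le]
  constructor <;> linarith [neg_abs_le (f (u t x))]

end InitialData

section Energy

lemma continuousOn_uncurry_deriv_viscousFlux (h : IsBurgersSolution f σ ν u) :
    ContinuousOn (Function.uncurry fun t => deriv (viscousFlux f ν u t)) (Ici 0 ×ˢ univ) := by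
  have huxx := h.continuousOn_uncurry_iteratedDeriv 2
  simp only [iteratedDeriv_succ, iteratedDeriv_zero] at huxx
  refine ((((contDiff_infty_iff_deriv.1 h.hf).2.continuous.comp_continuousOn h.hu.continuousOn).mul
    h.continuousOn_uncurry_deriv).sub (huxx.const_mul ν)).congr fun q hq => ?_
  exact (h.hasDerivAt_viscousFlux hq.1 q.2).deriv

lemma intervalIntegral_mul_deriv_viscousFlux (h : IsBurgersSolution f σ ν u) (ht : 0 ≤ t) :
    ∫ x in (0 : ℝ)..1, u t x * deriv (viscousFlux f ν u t) x = ν * sobLp 1 2 (u t) ^ 2 := by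
  have hu' : Continuous (deriv (u t)) := (h.contDiff_deriv ht).continuous
  have hfu : IntervalIntegrable (fun x => f (u t x) * deriv (u t) x) volume 0 1 :=
    ((h.hf.continuous.comp (h.contDiff ht).continuous).mul hu').intervalIntegrable _ _
  have hsq : IntervalIntegrable (fun x => ν * deriv (u t) x ^ 2) volume 0 1 :=
    ((hu'.pow 2).const_mul ν).intervalIntegrable _ _
  have hq' : Continuous (deriv (viscousFlux f ν u t)) := continuous_right_of_continuousOn_uncurry
    (g := fun t => deriv (viscousFlux f ν u t)) h.continuousOn_uncurry_deriv_viscousFlux ht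
  have hper : u t 1 * viscousFlux f ν u t 1 = u t 0 * viscousFlux f ν u t 0 := by
    simpa using congrArg₂ (· * ·) (h.hper t 0) (h.periodic_viscousFlux t 0)
  have htransport : ∫ x in (0 : ℝ)..1, f (u t x) * deriv (u t) x = 0 :=
    intervalIntegral_comp_mul_deriv_eq_zero (h.hasDerivAt ht) hu' h.hf.continuous
      (by simpa using (h.hper t 0).symm)
  rw [intervalIntegral.integral_mul_deriv_eq_deriv_mul (fun x _ => h.hasDerivAt ht x)
    (fun x _ => (h.hasDerivAt_viscousFlux ht x).differentiableAt.hasDerivAt)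
    (hu'.intervalIntegrable _ _) (hq'.intervalIntegrable _ _), hper, sub_self, zero_sub,
    sobLp_two_sq_eq_integral (h.continuous_iteratedDeriv ht 1), iteratedDeriv_one]
  calc -∫ x in (0 : ℝ)..1, deriv (u t) x * viscousFlux f ν u t x
      = -∫ x in (0 : ℝ)..1, (f (u t x) * deriv (u t) x - ν * deriv (u t) x ^ 2) := by
        congr 2 with x
        rw [viscousFlux]
        ring
    _ = ν * ∫ x in (0 : ℝ)..1, deriv (u t) x ^ 2 := by
        rw [intervalIntegral.integral_sub hfu hsq, htransport, zero_sub, neg_neg,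
          intervalIntegral.integral_const_mul]

lemma sobLp_zero_two_sq_sub_eq (h : IsBurgersSolution f σ ν u) (hT₁ : 0 ≤ T₁) (hT : T₁ ≤ T₂) :
    sobLp 0 2 (u T₁) ^ 2 - sobLp 0 2 (u T₂) ^ 2 =
      2 * ∫ t in T₁..T₂, ν * sobLp 1 2 (u t) ^ 2 := by
  have hsub : Icc T₁ T₂ ×ˢ Icc (0 : ℝ) 1 ⊆ Ici 0 ×ˢ univ :=
    prod_mono (Icc_subset_Ici_self.trans (Ici_subset_Ici.2 hT₁)) (subset_univ _)
  have henergy := intervalIntegral_sub_eq_of_hasDerivAt (w := fun t x => u t x ^ 2)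
    (w' := fun t x => -2 * (u t x * deriv (viscousFlux f ν u t) x)) hT zero_le_one
    ((h.hu.continuousOn.fun_pow 2).mono hsub)
    (((h.hu.continuousOn.mul h.continuousOn_uncurry_deriv_viscousFlux).const_mul (-2)).mono hsub)
    fun t ht x _ => ((h.hasDerivAt_time (hT₁.trans_lt ht.1) x).pow 2).congr_deriv (by ring)
  have hdissipation : ∀ t ∈ uIcc T₁ T₂,
      ∫ x in (0 : ℝ)..1, -2 * (u t x * deriv (viscousFlux f ν u t) x)
        = -2 * (ν * sobLp 1 2 (u t) ^ 2) := fun t ht => by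
    rw [uIcc_of_le hT] at ht
    rw [intervalIntegral.integral_const_mul,
      h.intervalIntegral_mul_deriv_viscousFlux (hT₁.trans ht.1)]
  rw [intervalIntegral.integral_congr hdissipation, intervalIntegral.integral_const_mul] at henergy
  rw [sobLp_two_sq_eq_integral (h.continuous_iteratedDeriv hT₁ 0),
    sobLp_two_sq_eq_integral (h.continuous_iteratedDeriv (hT₁.trans hT) 0), iteratedDeriv_zero,
    iteratedDeriv_zero]
  linarith

lemma continuousOn_sobLp {p : ℝ≥0∞} (h : IsBurgersSolution f σ ν u) (hp : 1 ≤ p) (m : ℕ)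
    (hT₁ : 0 ≤ T₁) : ContinuousOn (fun t => sobLp m p (u t)) (Icc T₁ T₂) :=
  (_root_.continuousOn_sobLp hp (h.continuousOn_uncurry_iteratedDeriv m)).mono
    (Icc_subset_Ici_self.trans (Ici_subset_Ici.2 hT₁))

lemma inv_sq_burgersD_sub_le (h : IsBurgersSolution f σ ν u)
    (hdiss : ∀ t, 0 ≤ t → ν * sobLp 1 2 (u t) ^ 2 ≤ Ct) (ht : 0 ≤ t) :
    (burgersD u ^ 2)⁻¹ - 2 * Ct * t ≤ sobLp 0 2 (u t) ^ 2 := by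
  have hle : ∫ s in (0 : ℝ)..t, ν * sobLp 1 2 (u s) ^ 2 ≤ ∫ _ in (0 : ℝ)..t, Ct :=
    intervalIntegral.integral_mono_on ht
      ((((h.continuousOn_sobLp one_le_two 1 le_rfl).pow 2).const_mul ν).intervalIntegrable_of_Icc
        ht) intervalIntegrable_const fun s hs => hdiss s hs.1
  rw [intervalIntegral.integral_const, smul_eq_mul, sub_zero] at hle
  linarith [h.inv_sq_burgersD_le, h.sobLp_zero_two_sq_sub_eq le_rfl ht]

lemma sobLp_zero_two_sq_le (h : IsBurgersSolution f σ ν u) (ht : 0 < t) :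
    sobLp 0 2 (u t) ^ 2 ≤ ((σ * t)⁻¹) ^ 2 := by
  have hcont := h.continuous_iteratedDeriv ht.le 0
  have htop := h.sobLp_zero_top_le ht
  calc sobLp 0 2 (u t) ^ 2 ≤ sobLp 0 1 (u t) * sobLp 0 ⊤ (u t) := sobLp_two_sq_le_mul hcont
    _ ≤ (σ * t)⁻¹ * (σ * t)⁻¹ := mul_le_mul ((sobLp_one_le_sobLp le_top hcont).trans htop) htop
        sobLp_nonneg (sobLp_nonneg.trans htop)
    _ = _ := (sq _).symm

end Energy

section TimeAverage

lemma le_timeAvg_sobLp_zero_two_sq (h : IsBurgersSolution f σ ν u)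
    (hdiss : ∀ t, 0 ≤ t → ν * sobLp 1 2 (u t) ^ 2 ≤ Ct) (hT₁ : 0 < T₁)
    (hT : 3 / 2 * T₁ ≤ T₂) (hCt : 4 * Ct * T₁ ≤ (burgersD u ^ 2)⁻¹) :
    (T₂ - T₁)⁻¹ * (T₁ / 8 * (burgersD u ^ 2)⁻¹)
      ≤ timeAvg T₁ T₂ fun t => sobLp 0 2 (u t) ^ 2 := by
  have hCt0 : 0 ≤ Ct := (mul_nonneg h.hν.le (sq_nonneg _)).trans (hdiss 0 le_rfl)
  have hcont : ∀ T, ContinuousOn (fun t => sobLp 0 2 (u t) ^ 2) (Icc T₁ T) := fun T =>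
    (h.continuousOn_sobLp one_le_two 0 hT₁.le).pow 2
  refine mul_le_mul_of_nonneg_left ?_ (inv_nonneg.2 (by linarith))
  calc T₁ / 8 * (burgersD u ^ 2)⁻¹
      = ∫ _ in T₁..3 / 2 * T₁, (burgersD u ^ 2)⁻¹ / 4 := by
        rw [intervalIntegral.integral_const, smul_eq_mul]
        ring
    _ ≤ ∫ t in T₁..3 / 2 * T₁, sobLp 0 2 (u t) ^ 2 := by
        have hT₁' : T₁ ≤ 3 / 2 * T₁ := by linarith
        refine intervalIntegral.integral_mono_on hT₁' intervalIntegrable_const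
          ((hcont _).intervalIntegrable_of_Icc hT₁') fun t ht => ?_
        linarith [h.inv_sq_burgersD_sub_le hdiss (hT₁.le.trans ht.1),
          mul_le_mul_of_nonneg_left ht.2 hCt0]
    _ ≤ ∫ t in T₁..T₂, sobLp 0 2 (u t) ^ 2 :=
        intervalIntegral.integral_mono_interval le_rfl (by linarith) hT
          (.of_forall fun _ => sq_nonneg _)
          ((hcont T₂).intervalIntegrable_of_Icc (by linarith))

lemma le_timeAvg_mul_sobLp_one_two_sq (h : IsBurgersSolution f σ ν u)
    (hdiss : ∀ t, 0 ≤ t → ν * sobLp 1 2 (u t) ^ 2 ≤ Ct) (hT₁ : 0 < T₁) (hT : T₁ ≤ T₂)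
    (hCt : 4 * Ct * T₁ ≤ (burgersD u ^ 2)⁻¹) (hD : 2 * burgersD u ≤ σ * T₂) :
    (T₂ - T₁)⁻¹ * ((burgersD u ^ 2)⁻¹ / 8)
      ≤ timeAvg T₁ T₂ fun t => ν * sobLp 1 2 (u t) ^ 2 := by
  have hpos := h.burgersD_pos
  have hfinal : sobLp 0 2 (u T₂) ^ 2 ≤ (burgersD u ^ 2)⁻¹ / 4 :=
    calc sobLp 0 2 (u T₂) ^ 2 ≤ ((σ * T₂)⁻¹) ^ 2 := h.sobLp_zero_two_sq_le (hT₁.trans_le hT)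
      _ ≤ ((2 * burgersD u)⁻¹) ^ 2 := by
          have : 0 < σ * T₂ := by linarith
          gcongr
      _ = (burgersD u ^ 2)⁻¹ / 4 := by rw [inv_pow, mul_pow, mul_inv]; ring
  refine mul_le_mul_of_nonneg_left ?_ (inv_nonneg.2 (sub_nonneg.2 hT))
  linarith [h.inv_sq_burgersD_sub_le hdiss hT₁.le, h.sobLp_zero_two_sq_sub_eq hT₁.le hT]

end TimeAverage

end IsBurgersSolution

section AveragedLowerBounds

variable {f : ℝ → ℝ} {σ D Ct T₁ T₂ α : ℝ} {p : ℝ≥0∞}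

lemma exists_le_timeAvg_sobLp_zero (hσ : 0 < σ) (hD : 0 < D) (hp : 1 ≤ p) (hα : 0 < α)
    (hT₁ : 0 < T₁) (hT : 3 / 2 * T₁ ≤ T₂) (hCt : 4 * Ct * T₁ ≤ (D ^ 2)⁻¹) :
    ∃ c > 0, ∀ ν u, IsBurgersSolution f σ ν u → burgersD u = D →
      (∀ t, 0 ≤ t → ν * sobLp 1 2 (u t) ^ 2 ≤ Ct) →
        c ≤ timeAvg T₁ T₂ (fun t => sobLp 0 p (u t) ^ α) ^ (1 / α) := by
  have hlt : T₁ < T₂ := by linarith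
  have : 0 < T₂ - T₁ := sub_pos.2 hlt
  set R := (σ * T₁)⁻¹
  have hR : 0 < R := by positivity
  set c := (T₂ - T₁)⁻¹ * (T₁ / 8 * (D ^ 2)⁻¹) / 2 with hc
  have hc0 : 0 < c := by positivity
  refine ⟨(c / R ^ 2) ^ (1 / α) * (c / R), by positivity, fun ν u h hu hdiss => ?_⟩
  subst hu
  have hdecay : ∀ t ∈ Icc T₁ T₂, (σ * t)⁻¹ ≤ R := fun t ht =>
    inv_anti₀ (by positivity) (mul_le_mul_of_nonneg_left ht.1 hσ.le)
  refine rpow_mul_le_timeAvg_rpow (g := fun t => sobLp 0 2 (u t) ^ 2) hlt hα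
    ((h.continuousOn_sobLp one_le_two 0 hT₁.le).pow 2) (h.continuousOn_sobLp hp 0 hT₁.le)
    (by positivity) hc0 (by positivity) (fun t ht => ?_) (fun _ _ => sobLp_nonneg)
    (fun t ht hct => ?_) (by linarith [h.le_timeAvg_sobLp_zero_two_sq hdiss hT₁ hT hCt])
  · have ht₀ := hT₁.trans_le ht.1
    exact (h.sobLp_zero_two_sq_le ht₀).trans
      (pow_le_pow_left₀ (inv_nonneg.2 (by positivity)) (hdecay t ht) 2)
  · have ht₀ := hT₁.trans_le ht.1
    have hcont := h.continuous_iteratedDeriv ht₀.le 0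
    rw [div_le_iff₀ hR]
    calc c ≤ sobLp 0 1 (u t) * sobLp 0 ⊤ (u t) := hct.trans (sobLp_two_sq_le_mul hcont)
      _ ≤ sobLp 0 p (u t) * R := mul_le_mul (sobLp_one_le_sobLp hp hcont)
          ((h.sobLp_zero_top_le ht₀).trans (hdecay t ht)) sobLp_nonneg sobLp_nonneg

lemma exists_mul_rpow_neg_le_timeAvg_sobLp_succ (hf : Continuous f) (hσ : 0 < σ) (hD : 0 < D)
    (hp : 1 ≤ p) (hα : 0 < α) (hCt₀ : 0 < Ct) (hT₁ : 0 < T₁) (hT : T₁ < T₂)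
    (hCt : 4 * Ct * T₁ ≤ (D ^ 2)⁻¹) (hDT : 2 * D ≤ σ * T₂) (m : ℕ) :
    ∃ c > 0, ∀ ν ≤ 1, ∀ u, IsBurgersSolution f σ ν u → burgersD u = D →
      (∀ t, 0 ≤ t → ν * sobLp 1 2 (u t) ^ 2 ≤ Ct) →
        c * ν ^ (-((m : ℝ) + 1 - (1 / p).toReal))
          ≤ timeAvg T₁ T₂ (fun t => sobLp (m + 1) p (u t) ^ α) ^ (1 / α) := by
  have : 0 < T₂ - T₁ := sub_pos.2 hT
  set R := (σ * T₁)⁻¹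
  have : 0 < R := by positivity
  set K := max D R
  have hK : 0 < K := hD.trans_le (le_max_left _ _)
  obtain ⟨M, hM⟩ := isCompact_Icc.exists_bound_of_continuousOn (s := Icc (-K) K) hf.continuousOn
  have hM₀ : 0 ≤ M := (norm_nonneg _).trans (hM 0 ⟨by linarith, by linarith⟩)
  set c := (T₂ - T₁)⁻¹ * ((D ^ 2)⁻¹ / 8) / 2 with hc
  have hc₀ : 0 < c := by positivity
  obtain ⟨κ, hκ, hlower⟩ := exists_mul_rpow_neg_le_sobLp_succ m hp hc₀
    (show 0 < 2 * R by positivity) (show 0 < K + 2 * M by positivity)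
  refine ⟨(c / Ct) ^ (1 / α) * κ, by positivity, fun ν hν u h hu hdiss => ?_⟩
  subst hu
  have hν₀ := h.hν
  rw [mul_assoc]
  refine rpow_mul_le_timeAvg_rpow (g := fun t => ν * sobLp 1 2 (u t) ^ 2) hT hα
    (((h.continuousOn_sobLp one_le_two 1 hT₁.le).pow 2).const_mul ν)
    (h.continuousOn_sobLp hp _ hT₁.le) (by positivity) hc₀ hCt₀
    (fun t ht => hdiss t (hT₁.le.trans ht.1)) (fun _ _ => sobLp_nonneg) (fun t ht hct => ?_)
    (by linarith [h.le_timeAvg_mul_sobLp_one_two_sq hdiss hT₁ hT.le hCt hDT])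
  have ht₀ : 0 < t := hT₁.trans_le ht.1
  have hdecay : (σ * t)⁻¹ ≤ R :=
    inv_anti₀ (by positivity) (mul_le_mul_of_nonneg_left ht.1 hσ.le)
  exact hlower ν hν₀ (u t) ((h.contDiff ht₀.le).of_le (by exact_mod_cast le_top)) (h.hper t) hct
    ((h.sobLp_one_one_le ht₀).trans (by linarith))
    (h.mul_sobLp_one_top_le hν ht₀ (le_max_left _ _) (hdecay.trans (le_max_right _ _)) hM)

lemma burgersT₁_pos (hD : 0 < D) (hCt : 0 < Ct) : 0 < burgersT₁ D Ct := by
  rw [burgersT₁]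
  positivity

lemma four_mul_burgersT₁ (hCt : Ct ≠ 0) : 4 * Ct * burgersT₁ D Ct = (D ^ 2)⁻¹ := by
  rw [burgersT₁]
  field_simp

lemma two_mul_le_mul_burgersT₂ (hσ : 0 < σ) : 2 * D ≤ σ * burgersT₂ σ D Ct := by
  rw [← div_le_iff₀' hσ]
  exact le_max_right _ _

lemma max_zero_natCast_succ_sub_toReal (m : ℕ) (hp : 1 ≤ p) :
    max 0 (((m + 1 : ℕ) : ℝ) - (1 / p).toReal) = m + 1 - (1 / p).toReal := by
  push_cast
  exact max_eq_right (by linarith [toReal_one_div_le_one hp, (m.cast_nonneg : (0 : ℝ) ≤ m)])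

end AveragedLowerBounds

/-- For every integer `m ≥ 0`, every `p ∈ [1,∞]` and every
`α > 0`, with `γ = max(0, m - 1/p)`, there is `c > 0` depending only on
`f`, `D`, `m`, `p`, `α` such that for every `ν ∈ (0,1]`,
`{|u(t)|_{m,p}^α}^{1/α} ≥ c ν^{-γ}`. -/
theorem statement11 (f : ℝ → ℝ) (σ D Ct : ℝ) (hCt : 0 < Ct)
    (hCtb : ∀ ν, 0 < ν → ν ≤ 1 →
      ∀ u : ℝ → ℝ → ℝ, IsBurgersSolution f σ ν u → burgersD u = D →
        ∀ t, 0 ≤ t → sobLp 1 2 (u t) ^ 2 ≤ Ct * ν⁻¹)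
    (m : ℕ) (p : ℝ≥0∞) (hp : 1 ≤ p) (α : ℝ) (hα : 0 < α) :
    ∃ c > 0, ∀ ν, 0 < ν → ν ≤ 1 →
      ∀ u : ℝ → ℝ → ℝ, IsBurgersSolution f σ ν u → burgersD u = D →
        c * ν ^ (-(max 0 ((m : ℝ) - (1 / p).toReal)))
          ≤ (timeAvg (burgersT₁ D Ct) (burgersT₂ σ D Ct)
              (fun t => sobLp m p (u t) ^ α)) ^ (1 / α) := by
  by_cases hex : ∃ ν u, IsBurgersSolution f σ ν u ∧ burgersD u = D
  swap
  · exact ⟨1, one_pos, fun ν _ _ u h hu => absurd ⟨ν, u, h, hu⟩ hex⟩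
  obtain ⟨ν₀, u₀, h₀, hD₀⟩ := hex
  have hD : 0 < D := hD₀ ▸ h₀.burgersD_pos
  have hT₁ : 0 < burgersT₁ D Ct := burgersT₁_pos hD hCt
  have hT : 3 / 2 * burgersT₁ D Ct ≤ burgersT₂ σ D Ct := le_max_left _ _
  have hCtT₁ : 4 * Ct * burgersT₁ D Ct ≤ (D ^ 2)⁻¹ := (four_mul_burgersT₁ hCt.ne').le
  have hdiss : ∀ ν, 0 < ν → ν ≤ 1 → ∀ u, IsBurgersSolution f σ ν u → burgersD u = D →
      ∀ t, 0 ≤ t → ν * sobLp 1 2 (u t) ^ 2 ≤ Ct := fun ν hν hν₁ u h hu t ht =>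
    (le_div_iff₀' hν).1 (by simpa only [div_eq_mul_inv] using hCtb ν hν hν₁ u h hu t ht)
  cases m with
  | zero =>
    obtain ⟨c, hc, hle⟩ := exists_le_timeAvg_sobLp_zero (f := f) h₀.hσ hD hp hα hT₁ hT hCtT₁
    exact ⟨c, hc, fun ν hν hν₁ u h hu => by simpa using hle ν u h hu (hdiss ν hν hν₁ u h hu)⟩
  | succ m =>
    obtain ⟨c, hc, hle⟩ := exists_mul_rpow_neg_le_timeAvg_sobLp_succ h₀.hf.continuous h₀.hσ hD hp
      hα hCt hT₁ (by linarith) hCtT₁ (two_mul_le_mul_burgersT₂ h₀.hσ) m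
    refine ⟨c, hc, fun ν hν hν₁ u h hu => ?_⟩
    rw [max_zero_natCast_succ_sub_toReal m hp]
    exact hle ν hν₁ u h hu (hdiss ν hν hν₁ u h hu)
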